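/- (Schneider) Let Ω be a lattice in ℂ with Weierstrass functions ℘, ζ and invariants g₂, g₃. Let α, β be complex numbers with (α, β) ≠ (0, 0) and let p ∈ ℂ ∖ Ω. Then at least one of the six numbers α, β, g₂, g₃, ℘(p), αp + βζ(p) is transcendental over ℚ. -/

import Mathlib

/-!
Schneider's theorem is proved by the transcendence method that now goes under the name of
Schneider and Lang.

Put `f(z) = αz + βζ(z)` and suppose that all six numbers are algebraic. Then `℘'(p)` is algebraic
too, by `℘'² = 4℘³ - g₂℘ - g₃`, and `℘(p)`, `℘'(p)`, `f(p)`, `g₂`, `α`, `β` lie in a number field `K`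
of some degree `h`.

*Infinitely many points.* The duplication formulas for `℘`, `℘'` and `ζ` have coefficients in
`ℚ(g₂)`, so `℘`, `℘'`, `f` take values in `K` at all points `2ᵏp`, as long as these stay outside `Ω`
(`values_dup`). If some `2ᵏp` is a half-period, its odd multiples serve instead (`values_odd`). The
duplication formulas follow by differentiation from `σ(z)⁴ ℘'(z) = C e^{az} σ(2z)`
(`duplication_sigma`), which holds because an entire function that is multiplied by constants under
the periods is an exponential (`quasi`).

*The auxiliary function.* Take `m = 12h + 12` such points. Since `℘''' = 12℘℘'` and `ζ' = -℘`, the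
derivatives of `℘` and `f` at these points lie in `K`, with controlled denominators and houses
(`exists_good`). Siegel's lemma (`exists_small_solution`) produces small integers `ξᵢⱼ` of `K`, not
all zero, such that `F = ∑ ξᵢⱼ ℘ⁱ fʲ`, with `i, j < N = 2mt`, vanishes to order `2mt²` at the `m`
points. As `℘` and `f` are algebraically independent (`alg_indep`), `F` is not identically zero; let
`n ≥ 2mt²` be the least order of a derivative of `F` not vanishing at one of the points, and `γ ∈ K`
the value of this derivative.

*The contradiction.* The conjugates and the denominator of `γ` are bounded by `n^{2n}` and `1`
respectively, up to factors `cⁿ`, so `|γ|` is bounded below by `n^{-2(h-1)n}`, again up to `cⁿ`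
(`liouville`). On the other hand `σ^{3N} F` is entire, because `σ²℘` and `σf` are, and has growth of
order at most three; dividing it by its zeros and applying the maximum principle on the circle of
radius `R = n^{1/6}` bounds `|γ|` above by `n^{2n} R^{-mn} = n^{-2hn}` up to `cⁿ` (`analytic_upper`).
Hence `n` is bounded independently of `t` (`order_bound`), which is absurd for `t` large
(`criterion`).

The functions `℘`, `g₂`, `g₃` are identified with those of Mathlib's `PeriodPair`, which provides the
differential equation, through the partial products of `σ` (`wP_eq`, `g2_eq`, `g3_eq`).
-/

open Complex

noncomputable section

/-- The lattice `ℤω₁ + ℤω₂`, as a set of complex numbers. -/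
def LatticePts (ω₁ ω₂ : ℂ) : Set ℂ := {z | ∃ m n : ℤ, z = m * ω₁ + n * ω₂}

/-- `ω₁, ω₂` are the basis of a lattice: they are `ℝ`-linearly independent. -/
def IsLatticeBasis (ω₁ ω₂ : ℂ) : Prop := LinearIndependent ℝ ![ω₁, ω₂]

/-- The nonzero lattice points. -/
def LatticePts' (ω₁ ω₂ : ℂ) : Set ℂ := {w | w ∈ LatticePts ω₁ ω₂ ∧ w ≠ 0}

/-- The Weierstrass sigma function of the lattice `ℤω₁ + ℤω₂`:
`σ(z) = z ∏_{ω ∈ Ω∖{0}} (1 − z/ω) exp(z/ω + z²/(2ω²))`. -/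
def wSigma (ω₁ ω₂ : ℂ) (z : ℂ) : ℂ :=
  z * ∏' w : LatticePts' ω₁ ω₂,
    (1 - z / (w : ℂ)) * Complex.exp (z / w + z ^ 2 / (2 * (w : ℂ) ^ 2))

/-- The Weierstrass zeta function `ζ = σ'/σ`. -/
def wZeta (ω₁ ω₂ : ℂ) (z : ℂ) : ℂ := deriv (wSigma ω₁ ω₂) z / wSigma ω₁ ω₂ z

/-- The Weierstrass elliptic function `℘ = -ζ'`. -/
def wP (ω₁ ω₂ : ℂ) (z : ℂ) : ℂ := - deriv (wZeta ω₁ ω₂) z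

/-- The invariant `g₂ = 60 Σ_{ω ∈ Ω∖{0}} ω⁻⁴` of the lattice. -/
def g2 (ω₁ ω₂ : ℂ) : ℂ := 60 * ∑' w : LatticePts' ω₁ ω₂, ((w : ℂ) ^ 4)⁻¹

/-- The invariant `g₃ = 140 Σ_{ω ∈ Ω∖{0}} ω⁻⁶` of the lattice. -/
def g3 (ω₁ ω₂ : ℂ) : ℂ := 140 * ∑' w : LatticePts' ω₁ ω₂, ((w : ℂ) ^ 6)⁻¹

/-- The quasi-period `η(ω) = ζ(z + ω) − ζ(z)` (independent of `z`; we evaluate at the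
point `(ω₁+ω₂)/3`, which is never a pole of `ζ`, nor is its translate by a lattice point). -/
def wEta (ω₁ ω₂ : ℂ) (ω : ℂ) : ℂ :=
  wZeta ω₁ ω₂ ((ω₁ + ω₂) / 3 + ω) - wZeta ω₁ ω₂ ((ω₁ + ω₂) / 3)

/-- The field of endomorphisms `k = {α ∈ ℂ : αΩ ⊆ Ω} ⊗_ℤ ℚ`, as a set of complex numbers:
the `α ∈ ℂ` such that `mα` stabilizes the lattice for some nonzero integer `m`. -/
def endQ (ω₁ ω₂ : ℂ) : Set ℂ :=
  {α | ∃ m : ℤ, m ≠ 0 ∧ ∀ w ∈ LatticePts ω₁ ω₂, (m : ℂ) * α * w ∈ LatticePts ω₁ ω₂}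

/-- The transcendence degree over `ℚ` of the subfield `ℚ(S)` of `ℂ` generated by `S` is
at least `d`: there are `d` algebraically independent elements in `ℚ(S)`. -/
def trdegGe (S : Set ℂ) (d : ℕ) : Prop :=
  ∃ x : Fin d → ℂ, (∀ i, x i ∈ IntermediateField.adjoin ℚ S) ∧ AlgebraicIndependent ℚ x

namespace Schneider

open Filter Topology PeriodPair

/-! ### The sigma function -/

/-- The Weierstrass primary factor of genus two at `w`, so that `σ(z) = z ∏ factor w z`. -/
def factor (w z : ℂ) : ℂ := (1 - z / w) * Complex.exp (z / w + z ^ 2 / (2 * w ^ 2))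

lemma factor_eq (w z : ℂ) : factor w z = (1 - z / w) * Complex.exp (z / w + (z / w) ^ 2 / 2) := by
  unfold factor
  congr 3
  rw [div_pow, div_div, mul_comm (2 : ℂ)]

lemma factor_eq_exp {w z : ℂ} (h : ‖z / w‖ ≤ 1 / 2) :
    ∃ v : ℂ, factor w z = Complex.exp v ∧ ‖v‖ ≤ ‖z / w‖ ^ 3 := by
  set u := z / w with hu
  have hu1 : ‖-u‖ < 1 := by rw [norm_neg]; linarith
  have hne : 1 + -u ≠ 0 := by
    intro h0
    have : u = 1 := by linear_combination -h0
    rw [this] at h; norm_num at h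
  refine ⟨Complex.log (1 + -u) - Complex.logTaylor 3 (-u), ?_, ?_⟩
  · have : Complex.logTaylor 3 (-u) = -(u + u ^ 2 / 2) := by
      simp [Complex.logTaylor, Finset.sum_range_succ]; ring
    rw [factor_eq, this, sub_neg_eq_add, Complex.exp_add (Complex.log _), Complex.exp_log hne,
      ← sub_eq_add_neg]
  · have := Complex.norm_log_sub_logTaylor_le 2 hu1
    refine this.trans ?_
    rw [norm_neg]
    have h3 : (0:ℝ) ≤ ‖u‖ ^ 3 := by positivity
    have : (1 - ‖u‖)⁻¹ ≤ 2 := by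
      rw [inv_le_comm₀ (by linarith) (by norm_num)]; linarith
    norm_num
    nlinarith

lemma norm_factor_sub_one_le {w z : ℂ} (h : ‖z / w‖ ≤ 1 / 2) :
    ‖factor w z - 1‖ ≤ 2 * ‖z / w‖ ^ 3 := by
  obtain ⟨v, hv, hle⟩ := factor_eq_exp h
  rw [hv]
  have : ‖v‖ ≤ 1 := hle.trans (pow_le_one₀ (norm_nonneg _) (by linarith))
  exact (Complex.norm_exp_sub_one_le this).trans (by linarith)

/-- A bound valid for all `z`, also far from the origin: the exponent `9 ‖z/w‖³` is summable over the
lattice, which yields growth of order three for `σ`. -/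
lemma norm_factor_le (w z : ℂ) : ‖factor w z‖ ≤ Real.exp (9 * ‖z / w‖ ^ 3) := by
  by_cases h : ‖z / w‖ ≤ 1 / 2
  · obtain ⟨v, hv, hle⟩ := factor_eq_exp h
    rw [hv]
    refine (Complex.norm_exp_le_exp_norm v).trans (Real.exp_le_exp.2 ?_)
    have : (0:ℝ) ≤ ‖z / w‖ ^ 3 := by positivity
    linarith
  · push Not at h
    rw [factor_eq, norm_mul]
    set u := z / w
    have h1 : ‖1 - u‖ ≤ Real.exp ‖u‖ := by
      refine (norm_sub_le _ _).trans ?_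
      rw [norm_one]
      have := Real.add_one_le_exp ‖u‖
      linarith
    have h2 : ‖Complex.exp (u + u ^ 2 / 2)‖ ≤ Real.exp (‖u‖ + ‖u‖ ^ 2 / 2) := by
      refine (Complex.norm_exp_le_exp_norm _).trans (Real.exp_le_exp.2 ?_)
      refine (norm_add_le _ _).trans ?_
      simp
    calc _ ≤ Real.exp ‖u‖ * Real.exp (‖u‖ + ‖u‖ ^ 2 / 2) := by gcongr
      _ = Real.exp (‖u‖ + (‖u‖ + ‖u‖ ^ 2 / 2)) := by rw [Real.exp_add ‖u‖ (‖u‖ + _)]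
      _ ≤ _ := by
        apply Real.exp_le_exp.2
        nlinarith [mul_pos (norm_pos_iff.2 (show u ≠ 0 by rintro h0; rw [h0] at h; norm_num at h))
          (sub_pos.2 h), sq_nonneg ‖u‖, mul_nonneg (sq_nonneg ‖u‖) (sub_pos.2 h).le]

lemma differentiable_factor (w : ℂ) : Differentiable ℂ (factor w) := by
  unfold factor
  by_cases hw : w = 0
  · subst hw; simp
  · fun_prop

lemma factor_ne_zero {w z : ℂ} (hw : w ≠ 0) (h : z ≠ w) : factor w z ≠ 0 := by
  unfold factor
  refine mul_ne_zero ?_ (Complex.exp_ne_zero _)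
  rw [sub_ne_zero]
  intro h1
  apply h
  field_simp at h1
  exact h1.symm

variable (L : PeriodPair)

lemma mem_latticePts {z : ℂ} : z ∈ LatticePts L.ω₁ L.ω₂ ↔ z ∈ L.lattice := by
  rw [PeriodPair.mem_lattice]
  simp only [LatticePts, Set.mem_ofPred_eq]
  constructor <;> rintro ⟨m, n, h⟩ <;> exact ⟨m, n, h.symm⟩

/-- The nonzero lattice points as elements of Mathlib's period lattice. -/
def incl (w : LatticePts' L.ω₁ L.ω₂) : L.lattice := ⟨w.1, (mem_latticePts L).1 w.2.1⟩

lemma incl_injective : Function.Injective (incl L) := by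
  intro a b h
  have := congrArg Subtype.val h
  exact Subtype.ext this

lemma mem_range_incl {l : L.lattice} (h : l ≠ 0) : l ∈ Set.range (incl L) :=
  ⟨⟨l.1, (mem_latticePts L).2 l.2, by simpa using h⟩, rfl⟩

lemma summable_cube : Summable fun w : LatticePts' L.ω₁ L.ω₂ ↦ ‖(w : ℂ)‖⁻¹ ^ 3 := by
  have h := ZLattice.summable_norm_rpow L.lattice (-3) (by simp; norm_num)
  have := h.comp_injective (incl_injective L)
  refine this.congr fun w ↦ ?_
  have e : ((-3 : ℝ)) = ((-3 : ℤ) : ℝ) := by norm_num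
  rw [Function.comp, e, Real.rpow_intCast]
  simp [incl, zpow_neg]

/-- The index set of the sigma product: the nonzero lattice points. -/
abbrev Idx := LatticePts' L.ω₁ L.ω₂

/-- The condition needed for the Weierstrass M-test on the ball of radius `r`: the estimate for
`factor w z - 1` holds once `‖w‖` exceeds `2r`, that is, for all but finitely many `w`. -/
lemma eventually_bound (r : ℝ) (hr : 0 < r) :
    ∀ᶠ w : Idx L in cofinite, ∀ z ∈ Metric.ball (0 : ℂ) r,
      ‖factor w z - 1‖ ≤ 2 * r ^ 3 * ‖(w : ℂ)‖⁻¹ ^ 3 := by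
  have h0 : Tendsto (fun w : Idx L ↦ ‖(w : ℂ)‖⁻¹ ^ 3) cofinite (𝓝 0) :=
    (summable_cube L).tendsto_cofinite_zero
  have h1 := h0.eventually (gt_mem_nhds (show (0:ℝ) < (1 / (2 * r)) ^ 3 by positivity))
  filter_upwards [h1] with w hw z hz
  have hw' : ‖(w : ℂ)‖⁻¹ < 1 / (2 * r) := lt_of_pow_lt_pow_left₀ 3 (by positivity) hw
  have hz' : ‖z‖ ≤ r := by simpa using (Metric.mem_ball.1 hz).le
  have hle : ‖z / w‖ ≤ r * ‖(w : ℂ)‖⁻¹ := by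
    rw [norm_div, div_eq_mul_inv]; gcongr
  have : ‖z / w‖ ≤ 1 / 2 := by
    refine hle.trans ?_
    calc r * ‖(w : ℂ)‖⁻¹ ≤ r * (1 / (2 * r)) := by gcongr
      _ = 1 / 2 := by field_simp
  refine (norm_factor_sub_one_le this).trans ?_
  rw [mul_assoc, ← mul_pow]
  gcongr

lemma hasProd_ball (r : ℝ) (hr : 0 < r) :
    HasProdLocallyUniformlyOn (fun (w : Idx L) z ↦ factor w z)
      (fun z ↦ ∏' w : Idx L, factor w z) (Metric.ball 0 r) := by
  have := Summable.hasProdLocallyUniformlyOn_one_add (f := fun (w : Idx L) z ↦ factor w z - 1)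
    Metric.isOpen_ball ((summable_cube L).mul_left (2 * r ^ 3)) (eventually_bound L r hr)
    (fun w ↦ ((differentiable_factor w).continuous.sub continuous_const).continuousOn)
  simpa using this

lemma wSigma_eq (z : ℂ) : wSigma L.ω₁ L.ω₂ z = z * ∏' w : Idx L, factor w z := rfl

/-- Partial products of the sigma function. -/
def part (s : Finset (Idx L)) (z : ℂ) : ℂ := z * ∏ w ∈ s, factor w z

lemma differentiable_part (s : Finset (Idx L)) : Differentiable ℂ (part L s) := by
  unfold part
  have : Differentiable ℂ fun z ↦ ∏ w ∈ s, factor w z :=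
    Differentiable.fun_finsetProd fun w _ ↦ differentiable_factor w
  fun_prop

lemma tendsto_prod (r : ℝ) (hr : 0 < r) :
    TendstoLocallyUniformlyOn (fun (s : Finset (Idx L)) z ↦ ∏ w ∈ s, factor w z)
      (fun z ↦ ∏' w : Idx L, factor w z) atTop (Metric.ball 0 r) :=
  hasProdLocallyUniformlyOn_iff_tendstoLocallyUniformlyOn.1 (hasProd_ball L r hr)

lemma differentiable_tprod : Differentiable ℂ fun z ↦ ∏' w : Idx L, factor w z := by
  intro z
  have hr : 0 < ‖z‖ + 1 := by positivity
  have := (tendsto_prod L _ hr).differentiableOn (.of_forall fun s ↦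
    (Differentiable.fun_finsetProd (f := fun (w : Idx L) ↦ factor w.1)
      fun w _ ↦ differentiable_factor w).differentiableOn)
    Metric.isOpen_ball
  exact this.differentiableAt (Metric.isOpen_ball.mem_nhds (by simp))

lemma differentiable_sigma : Differentiable ℂ (wSigma L.ω₁ L.ω₂) := by
  have : wSigma L.ω₁ L.ω₂ = fun z ↦ z * ∏' w : Idx L, factor w z := rfl
  rw [this]
  exact differentiable_id.mul (differentiable_tprod L)

lemma summable_factor (z : ℂ) : Summable fun w : Idx L ↦ ‖factor w z - 1‖ := by
  have hr : 0 < ‖z‖ + 1 := by positivity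
  refine ((summable_cube L).mul_left (2 * (‖z‖ + 1) ^ 3)).of_norm_bounded_eventually ?_
  filter_upwards [eventually_bound L _ hr] with w hw
  rw [norm_norm]
  exact hw z (by simp)

lemma sigma_ne_zero {z : ℂ} (hz : z ∉ L.lattice) : wSigma L.ω₁ L.ω₂ z ≠ 0 := by
  rw [wSigma_eq]
  refine mul_ne_zero (by rintro rfl; exact hz (zero_mem _)) ?_
  have := tprod_one_add_ne_zero_of_summable (f := fun w : Idx L ↦ factor w z - 1) ?_
    (summable_factor L z)
  · simpa using this
  · intro w
    rw [add_sub_cancel]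
    exact factor_ne_zero w.2.2 (by rintro rfl; exact hz ((mem_latticePts L).1 w.2.1))

lemma multipliable_factor (z : ℂ) : Multipliable fun w : Idx L ↦ factor w z := by
  have := multipliable_one_add_of_summable (summable_factor L z)
  simpa using this

lemma sigma_zero : wSigma L.ω₁ L.ω₂ 0 = 0 := by simp [wSigma_eq]

lemma sigma_eq_zero_of_mem {z : ℂ} (hz : z ∈ L.lattice) : wSigma L.ω₁ L.ω₂ z = 0 := by
  by_cases h0 : z = 0
  · rw [h0, sigma_zero]
  rw [wSigma_eq]
  refine mul_eq_zero_of_right _ ?_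
  obtain ⟨w, hw⟩ := mem_range_incl L (l := ⟨z, hz⟩) (by simpa using h0)
  refine tprod_of_exists_eq_zero ⟨w, ?_⟩
  have : (w : ℂ) = z := congrArg Subtype.val hw
  rw [this]
  simp [factor, h0]

lemma tprod_zero : ∏' w : Idx L, factor w 0 = 1 := by simp [factor]

lemma deriv_sigma_zero : deriv (wSigma L.ω₁ L.ω₂) 0 = 1 := by
  have : wSigma L.ω₁ L.ω₂ = fun z ↦ z * ∏' w : Idx L, factor w z := rfl
  rw [this, deriv_fun_mul (c := fun z ↦ z) differentiableAt_fun_id (differentiable_tprod L 0)]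
  simp [tprod_zero]

lemma sigma_neg (z : ℂ) : wSigma L.ω₁ L.ω₂ (-z) = - wSigma L.ω₁ L.ω₂ z := by
  rw [wSigma_eq, wSigma_eq, neg_mul]
  congr 2
  have hneg : ∀ w ∈ LatticePts' L.ω₁ L.ω₂, -w ∈ LatticePts' L.ω₁ L.ω₂ := by
    rintro w ⟨h1, h2⟩
    refine ⟨(mem_latticePts L).2 (neg_mem ((mem_latticePts L).1 h1)), neg_ne_zero.2 h2⟩
  let e : Idx L ≃ Idx L :=
    { toFun := fun w ↦ ⟨-w.1, hneg _ w.2⟩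
      invFun := fun w ↦ ⟨-w.1, hneg _ w.2⟩
      left_inv := fun w ↦ by simp
      right_inv := fun w ↦ by simp }
  rw [← e.tprod_eq]
  refine tprod_congr fun w ↦ ?_
  simp [e, factor]

/-- `σ` has order of growth at most three. The true order is two, but any finite order is enough
here, and three drops out of the product without further work. -/
lemma sigma_growth : ∃ C : ℝ, 1 ≤ C ∧ ∀ z, ‖wSigma L.ω₁ L.ω₂ z‖ ≤ Real.exp (C * (1 + ‖z‖) ^ 3) := by
  set S := ∑' w : Idx L, ‖(w : ℂ)‖⁻¹ ^ 3 with hS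
  have hS0 : 0 ≤ S := tsum_nonneg fun w ↦ by positivity
  refine ⟨9 * S + 1, by linarith, fun z ↦ ?_⟩
  have hprod : ‖∏' w : Idx L, factor w z‖ ≤ Real.exp (9 * ‖z‖ ^ 3 * S) := by
    refine le_of_tendsto ((multipliable_factor L z).hasProd.norm) (.of_forall fun s ↦ ?_)
    calc ∏ w ∈ s, ‖factor w z‖ ≤ ∏ w ∈ s, Real.exp (9 * ‖z‖ ^ 3 * ‖(w : ℂ)‖⁻¹ ^ 3) := by
          refine Finset.prod_le_prod (fun _ _ ↦ norm_nonneg _) fun w _ ↦ ?_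
          refine (norm_factor_le _ _).trans (le_of_eq ?_)
          rw [norm_div, div_eq_mul_inv, mul_pow, mul_assoc]
      _ = Real.exp (9 * ‖z‖ ^ 3 * ∑ w ∈ s, ‖(w : ℂ)‖⁻¹ ^ 3) := by
          rw [← Real.exp_sum, Finset.mul_sum]
      _ ≤ _ := by
          apply Real.exp_le_exp.2
          gcongr
          exact (summable_cube L).sum_le_tsum _ fun _ _ ↦ by positivity
  rw [wSigma_eq, norm_mul]
  have h1 : ‖z‖ ≤ Real.exp ‖z‖ := by linarith [Real.add_one_le_exp ‖z‖]
  calc _ ≤ Real.exp ‖z‖ * Real.exp (9 * ‖z‖ ^ 3 * S) := by gcongr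
    _ = Real.exp (‖z‖ + 9 * ‖z‖ ^ 3 * S) := by rw [Real.exp_add]
    _ ≤ _ := by
      apply Real.exp_le_exp.2
      have hz := norm_nonneg z
      have e1 : ‖z‖ ^ 3 ≤ (1 + ‖z‖) ^ 3 := by gcongr; linarith
      have e2 : ‖z‖ ≤ (1 + ‖z‖) ^ 3 := by nlinarith [pow_nonneg hz 3, pow_nonneg hz 2]
      nlinarith

end Schneider

namespace Schneider

open Filter Topology PeriodPair

variable (L : PeriodPair)

/-! ### The relations between `σ`, `ζ` and `℘` -/

/-- The sigma function of a period pair. -/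
abbrev sg : ℂ → ℂ := wSigma L.ω₁ L.ω₂

/-- The Weierstrass zeta function of a period pair. -/
abbrev zt : ℂ → ℂ := wZeta L.ω₁ L.ω₂

lemma isOpen_compl : IsOpen (L.latticeᶜ : Set ℂ) := L.isClosed_lattice.isOpen_compl

lemma tendsto_part (r : ℝ) (hr : 0 < r) :
    TendstoLocallyUniformlyOn (part L) (sg L) atTop (Metric.ball 0 r) := by
  have h3 : TendstoLocallyUniformlyOn (fun (_ : Finset (Idx L)) (z : ℂ) ↦ z) (fun z ↦ z) atTop
      (Metric.ball 0 r) := by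
    apply TendstoUniformlyOn.tendstoLocallyUniformlyOn
    intro u hu
    exact .of_forall fun _ _ _ ↦ refl_mem_uniformity hu
  exact h3.mul₀ (tendsto_prod L r hr) continuousOn_id
    (differentiable_tprod L).continuous.continuousOn

lemma differentiable_part' (s : Finset (Idx L)) : Differentiable ℂ (deriv (part L s)) :=
  ((differentiable_part L s).contDiff (n := 2)).differentiable_deriv_two

/-- Locally uniform convergence of holomorphic functions passes to derivatives, so the first two
derivatives of the partial products converge to those of `σ`. -/
lemma tendsto_derivs (z : ℂ) :
    Tendsto (fun s ↦ part L s z) atTop (𝓝 (sg L z)) ∧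
    Tendsto (fun s ↦ deriv (part L s) z) atTop (𝓝 (deriv (sg L) z)) ∧
    Tendsto (fun s ↦ deriv (deriv (part L s)) z) atTop (𝓝 (deriv (deriv (sg L)) z)) := by
  have hr : 0 < ‖z‖ + 1 := by positivity
  have hz : z ∈ Metric.ball (0 : ℂ) (‖z‖ + 1) := by simp
  have h0 := tendsto_part L _ hr
  have h1 := h0.deriv (.of_forall fun s ↦ (differentiable_part L s).differentiableOn)
    Metric.isOpen_ball
  have h2 := h1.deriv (.of_forall fun s ↦ (differentiable_part' L s).differentiableOn)
    Metric.isOpen_ball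
  exact ⟨h0.tendsto_at hz, h1.tendsto_at hz, h2.tendsto_at hz⟩

lemma deriv_logDeriv_eq {f : ℂ → ℂ} (hf : Differentiable ℂ f) {z : ℂ} (hz : f z ≠ 0) :
    HasDerivAt (fun z ↦ deriv f z / f z)
      ((deriv (deriv f) z * f z - deriv f z * deriv f z) / f z ^ 2) z := by
  have h2 : Differentiable ℂ (deriv f) := (hf.contDiff (n := 2)).differentiable_deriv_two
  exact (h2 z).hasDerivAt.div (hf z).hasDerivAt hz

lemma logDeriv_factor {w z : ℂ} (hw : w ≠ 0) (h : z ≠ w) :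
    logDeriv (factor w) z = 1 / (z - w) + (1 / w + z / w ^ 2) := by
  have h1 : HasDerivAt (fun z ↦ 1 - z / w) (-(1 / w)) z := by
    simpa using ((hasDerivAt_id z).div_const w).const_sub 1
  have h2 : HasDerivAt (fun z ↦ z / w + z ^ 2 / (2 * w ^ 2)) (1 / w + z / w ^ 2) z := by
    have := ((hasDerivAt_id z).div_const w).add (((hasDerivAt_id z).pow 2).div_const (2 * w ^ 2))
    convert! this using 1
    simp; field_simp
  have h3 := h1.mul h2.cexp
  have h4 : deriv (factor w) z = _ := h3.deriv
  have h5 : z - w ≠ 0 := sub_ne_zero.2 h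
  have h6 : 1 - z / w ≠ 0 := by
    rw [sub_ne_zero]; intro h1; apply h; field_simp at h1; exact h1.symm
  have h7 : 1 / (z - w) = -(1 / w) / (1 - z / w) := by
    have h8 : w - z ≠ 0 := sub_ne_zero.2 h.symm
    field_simp
    ring
  rw [logDeriv_apply, h4, factor, h7]
  have := Complex.exp_ne_zero (z / w + z ^ 2 / (2 * w ^ 2))
  field_simp

lemma part_ne_zero (s : Finset (Idx L)) {z : ℂ} (hz : z ∉ L.lattice) : part L s z ≠ 0 := by
  refine mul_ne_zero (by rintro rfl; exact hz (zero_mem _)) (Finset.prod_ne_zero_iff.2 ?_)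
  intro w _
  exact factor_ne_zero w.2.2 (by rintro rfl; exact hz ((mem_latticePts L).1 w.2.1))

lemma logDeriv_part (s : Finset (Idx L)) {z : ℂ} (hz : z ∉ L.lattice) :
    deriv (part L s) z / part L s z =
      1 / z + ∑ w ∈ s, (1 / (z - w) + (1 / (w : ℂ) + z / (w : ℂ) ^ 2)) := by
  have hz0 : z ≠ 0 := by rintro rfl; exact hz (zero_mem _)
  have hne : ∀ w : Idx L, z ≠ w := by
    rintro w rfl; exact hz ((mem_latticePts L).1 w.2.1)
  have e : part L s = fun z ↦ (fun z ↦ z) z * (∏ w ∈ s, factor w z) := rfl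
  rw [← logDeriv_apply, e, logDeriv_mul z hz0
    (Finset.prod_ne_zero_iff.2 fun w _ ↦ factor_ne_zero w.2.2 (hne w)) differentiableAt_fun_id
    (Differentiable.fun_finsetProd (f := fun (w : Idx L) ↦ factor w.1)
      fun w _ ↦ differentiable_factor w).differentiableAt,
    logDeriv_prod (f := fun w : Idx L ↦ factor w.1) (fun w _ ↦ factor_ne_zero w.2.2 (hne w))
     (fun w _ ↦ (differentiable_factor w).differentiableAt)]
  congr 1
  · simp [logDeriv_apply]
  · exact Finset.sum_congr rfl fun w _ ↦ logDeriv_factor w.2.2 (hne w)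

/-- Minus the second logarithmic derivative of a partial product of `σ` is a partial sum of the
series of `℘`. -/
lemma part_formula (s : Finset (Idx L)) {z : ℂ} (hz : z ∉ L.lattice) :
    (deriv (deriv (part L s)) z * part L s z - deriv (part L s) z * deriv (part L s) z) /
      part L s z ^ 2 = -(1 / z ^ 2 + ∑ w ∈ s, (1 / (z - w) ^ 2 - 1 / (w : ℂ) ^ 2)) := by
  have hz0 : z ≠ 0 := by rintro rfl; exact hz (zero_mem _)
  have hne : ∀ w : Idx L, z - w ≠ 0 := by
    intro w h
    rw [sub_eq_zero] at h
    rw [h] at hz; exact hz ((mem_latticePts L).1 w.2.1)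
  have h1 := deriv_logDeriv_eq (differentiable_part L s) (part_ne_zero L s hz)
  have h2 : HasDerivAt (fun z ↦ 1 / z + ∑ w ∈ s, (1 / (z - w) + (1 / (w : ℂ) + z / (w : ℂ) ^ 2)))
      (-(1 / z ^ 2 + ∑ w ∈ s, (1 / (z - w) ^ 2 - 1 / (w : ℂ) ^ 2))) z := by
    have h3 : ∀ w ∈ s, HasDerivAt (fun z ↦ (1 / (z - w) + (1 / (w : ℂ) + z / (w : ℂ) ^ 2)))
       (-(1 / (z - w) ^ 2 - 1 / (w : ℂ) ^ 2)) z := by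
      intro w _
      have a1 := ((hasDerivAt_id z).sub_const (w : ℂ)).inv (hne w)
      have a2 := (((hasDerivAt_id z).div_const ((w : ℂ) ^ 2)).const_add (1 / (w : ℂ)))
      convert! a1.add a2 using 1
      · ext; simp
      · simp; ring
    have h4 := (hasDerivAt_inv hz0).add (HasDerivAt.fun_sum h3)
    convert! h4 using 1
    · ext; simp
    · rw [Finset.sum_neg_distrib]; simp; ring
  refine (h1.congr_of_eventuallyEq ?_).unique h2
  filter_upwards [(isOpen_compl L).mem_nhds hz] with y hy
  exact (logDeriv_part L s hy).symm

/-- The Mathlib series of `℘` runs over all lattice points; the term `1/z²` at `0` is split off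
here. -/
lemma hasSum_part (z : ℂ) :
    HasSum (fun w : Idx L ↦ (1 / (z - w) ^ 2 - 1 / (w : ℂ) ^ 2)) (℘[L] z - 1 / z ^ 2) := by
  have h := L.hasSum_weierstrassPExcept 0 z
  have e : L.weierstrassPExcept 0 z = ℘[L] z - 1 / z ^ 2 := by
    have := L.weierstrassPExcept_add 0 z
    simp only [ZeroMemClass.coe_zero, sub_zero] at this
    rw [← this]; simp
  rw [e] at h
  have h' := ((incl_injective L).hasSum_iff ?_).2 h
  · refine h'.congr_fun ?_ |> fun h ↦ h
    intro w
    simp [Function.comp, incl, w.2.2]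
  · intro l hl
    have : l = 0 := by
      by_contra h0
      exact hl (mem_range_incl L h0)
    simp [this]

/-- `ζ' = -℘` away from the lattice. -/
lemma hasDerivAt_zt {z : ℂ} (hz : z ∉ L.lattice) : HasDerivAt (zt L) (-℘[L] z) z := by
  have hs := sigma_ne_zero L hz
  have h1 := deriv_logDeriv_eq (differentiable_sigma L) hs
  obtain ⟨t0, t1, t2⟩ := tendsto_derivs L z
  have t := ((t2.mul t0).sub (t1.mul t1)).div (t0.pow 2) (pow_ne_zero 2 hs)
  have t' : Tendsto (fun s : Finset (Idx L) ↦
      -(1 / z ^ 2 + ∑ w ∈ s, (1 / (z - w) ^ 2 - 1 / (w : ℂ) ^ 2))) atTop (𝓝 (-℘[L] z)) := by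
    have := ((hasSum_part L z).const_add (1 / z ^ 2)).neg
    simpa using this
  have e : (deriv (deriv (sg L)) z * sg L z - deriv (sg L) z * deriv (sg L) z) / sg L z ^ 2
      = -℘[L] z := by
    refine tendsto_nhds_unique (t.congr fun s ↦ part_formula L s hz) t'
  rw [← e]
  exact h1

lemma wP_eq {z : ℂ} (hz : z ∉ L.lattice) : wP L.ω₁ L.ω₂ z = ℘[L] z := by
  rw [wP, (hasDerivAt_zt L hz).deriv, neg_neg]

lemma tsum_Idx (n : ℕ) (hn : n ≠ 0) : ∑' w : Idx L, ((w : ℂ) ^ n)⁻¹ = L.G n := by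
  rw [PeriodPair.G, ← (incl_injective L).tsum_eq (f := fun l : L.lattice ↦ ((l : ℂ) ^ n)⁻¹)]
  · rfl
  · intro l hl
    apply mem_range_incl L
    rintro rfl
    simp [hn] at hl

lemma g2_eq : g2 L.ω₁ L.ω₂ = L.g₂ := by rw [g2, tsum_Idx L 4 (by norm_num), PeriodPair.g₂]

lemma g3_eq : g3 L.ω₁ L.ω₂ = L.g₃ := by rw [g3, tsum_Idx L 6 (by norm_num), PeriodPair.g₃]

end Schneider

namespace Schneider

open Filter Topology PeriodPair

variable (L : PeriodPair)

/-! ### Quasi-periodicity -/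

lemma countable_lattice : (L.lattice : Set ℂ).Countable := by
  have : Countable L.lattice := L.latticeEquivProd.toEquiv.countable_iff.2 inferInstance
  exact Set.to_countable _

lemma dense_compl : Dense (L.latticeᶜ : Set ℂ) := (countable_lattice L).dense_compl ℂ

lemma isPreconnected_compl : IsPreconnected (L.latticeᶜ : Set ℂ) :=
  ((countable_lattice L).isConnected_compl_of_one_lt_rank (by simp)).2

lemma add_notMem {z : ℂ} (hz : z ∉ L.lattice) (ω : L.lattice) : z + ω ∉ L.lattice :=
  fun h ↦ hz (by simpa using sub_mem h ω.2)

lemma neg_notMem {z : ℂ} (hz : z ∉ L.lattice) : -z ∉ L.lattice :=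
  fun h ↦ hz (by simpa using neg_mem h)

/-- The quasi-period of `ζ` attached to a lattice point, computed from the base point `ω₁ / 2`,
which is not a pole of `ζ`. -/
def eta (ω : L.lattice) : ℂ := zt L (L.ω₁ / 2 + ω) - zt L (L.ω₁ / 2)

/-- `ζ(z + ω) - ζ(z)` has derivative zero on the complement of the lattice, which is connected. -/
lemma zt_add {z : ℂ} (hz : z ∉ L.lattice) (ω : L.lattice) : zt L (z + ω) = zt L z + eta L ω := by
  have hd : ∀ y ∈ (L.latticeᶜ : Set ℂ), HasDerivAt (fun y ↦ zt L (y + ω) - zt L y) 0 y := by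
    intro y hy
    have h1 := (hasDerivAt_zt L (add_notMem L hy ω)).comp_add_const y (ω : ℂ)
    have := h1.fun_sub (hasDerivAt_zt L hy)
    simpa using this
  have := (isOpen_compl L).is_const_of_deriv_eq_zero (isPreconnected_compl L)
    (fun y hy ↦ (hd y hy).differentiableAt.differentiableWithinAt) (fun y hy ↦ (hd y hy).deriv)
    (x := z) (y := L.ω₁ / 2) hz L.ω₁_div_two_notMem_lattice
  simp only [eta]
  linear_combination this

lemma deriv_sg {z : ℂ} (hz : z ∉ L.lattice) : deriv (sg L) z = sg L z * zt L z := by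
  rw [zt, wZeta, mul_div_cancel₀ _ (sigma_ne_zero L hz)]

/-- Quasi-periodicity of `σ`: the quotient `σ(z + ω) e^{-η(ω)z} / σ(z)` has derivative zero off
the lattice. -/
lemma sg_add (ω : L.lattice) : ∃ C : ℂ, C ≠ 0 ∧
    ∀ z, sg L (z + ω) = C * cexp (eta L ω * z) * sg L z := by
  have hd : ∀ y ∈ (L.latticeᶜ : Set ℂ),
      HasDerivAt (fun y ↦ sg L (y + ω) * cexp (-(eta L ω * y)) / sg L y) 0 y := by
    intro y hy
    have hy' := add_notMem L hy ω
    have h1 := ((differentiable_sigma L (y + ω)).hasDerivAt).comp_add_const y (ω : ℂ)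
    have h2 := (((hasDerivAt_id y).const_mul (eta L ω)).neg).cexp
    have h3 := (h1.mul h2).div (differentiable_sigma L y).hasDerivAt (sigma_ne_zero L hy)
    convert! h3 using 1
    have e1 := deriv_sg L hy
    have e2 := deriv_sg L hy'
    rw [zt_add L hy] at e2
    rw [e1, e2]
    simp
    ring
  set c := sg L (L.ω₁ / 2 + ω) * cexp (-(eta L ω * (L.ω₁ / 2))) / sg L (L.ω₁ / 2) with hc
  have hh := L.ω₁_div_two_notMem_lattice
  refine ⟨c, ?_, ?_⟩
  · exact div_ne_zero (mul_ne_zero (sigma_ne_zero L (add_notMem L hh ω)) (Complex.exp_ne_zero _))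
      (sigma_ne_zero L hh)
  · have hσ := (differentiable_sigma L).continuous
    intro z
    refine congrFun (Continuous.ext_on (dense_compl L) (f := fun z ↦ sg L (z + ω))
      (g := fun z ↦ c * cexp (eta L ω * z) * sg L z) (by fun_prop) (by fun_prop) ?_) z
    intro y hy
    have := (isOpen_compl L).is_const_of_deriv_eq_zero (isPreconnected_compl L)
      (fun y hy ↦ (hd y hy).differentiableAt.differentiableWithinAt) (fun y hy ↦ (hd y hy).deriv)
      (x := y) (y := L.ω₁ / 2) hy hh
    simp only at this ⊢
    rw [hc, ← this, Complex.exp_neg]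
    have := Complex.exp_ne_zero (eta L ω * y)
    have := sigma_ne_zero L hy
    field_simp

lemma zt_neg {z : ℂ} : zt L (-z) = -zt L z := by
  have h : deriv (sg L) (-z) = deriv (sg L) z := by
    have h1 : (fun z ↦ sg L (-z)) = fun z ↦ - sg L z := funext (sigma_neg L)
    have h2 := congrArg (fun f ↦ deriv f z) h1
    rw [deriv_comp_neg, deriv.fun_neg] at h2
    linear_combination -h2
  simp only [zt, wZeta]
  rw [h, sigma_neg, div_neg]

/-- For a half-period `h`, oddness of `ζ` and `ζ(-h + 2h) = ζ(-h) + η(2h)` give `η(2h) = 2ζ(h)`. -/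
lemma periods_half (h : ℂ) (hh : h ∉ L.lattice) (ω : L.lattice) (e : (ω : ℂ) = 2 * h) :
    eta L ω = 2 * zt L h := by
  have := zt_add L (neg_notMem L hh) ω
  rw [e, show -h + 2 * h = h by ring, zt_neg] at this
  linear_combination -this

/-- Every real-linear functional on `ℂ` has the form `z ↦ Re (a z)`, so its values on the two basic
periods can be prescribed. -/
lemma exists_re_eq (t₁ t₂ : ℝ) : ∃ a : ℂ, (a * L.ω₁).re = t₁ ∧ (a * L.ω₂).re = t₂ := by
  let ℓ : ℂ →ₗ[ℝ] ℝ := L.basis.constr ℝ ![t₁, t₂]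
  have key : ∀ z, (((ℓ 1 : ℂ) - Complex.I * (ℓ Complex.I : ℂ)) * z).re = ℓ z := by
    intro z
    have : z = z.re • (1 : ℂ) + z.im • Complex.I := by simp [Complex.re_add_im]
    conv_rhs => rw [this, map_add, map_smul, map_smul]
    simp
    ring
  refine ⟨_, (key _).trans ?_, (key _).trans ?_⟩
  · rw [← L.basis_zero]; simp only [ℓ, Module.Basis.constr_basis]; simp
  · rw [← L.basis_one]; simp only [ℓ, Module.Basis.constr_basis]; simp

/-- An entire function which is multiplied by a nonzero constant under each period is an
exponential: after a suitable exponential twist its modulus is doubly periodic, so Liouville's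
theorem applies. -/
lemma quasi {g : ℂ → ℂ} (hg : Differentiable ℂ g) {c₁ c₂ : ℂ} (h1 : c₁ ≠ 0) (h2 : c₂ ≠ 0)
    (e1 : ∀ z, g (z + L.ω₁) = c₁ * g z) (e2 : ∀ z, g (z + L.ω₂) = c₂ * g z) :
    ∃ C a : ℂ, ∀ z, g z = C * cexp (a * z) := by
  obtain ⟨a, ha1, ha2⟩ := exists_re_eq L (-Real.log ‖c₁‖) (-Real.log ‖c₂‖)
  set G : ℂ → ℂ := fun z ↦ cexp (a * z) * g z with hG
  have hGd : Differentiable ℂ G := by fun_prop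
  have p1 : ∀ z, ‖G (z + L.ω₁)‖ = ‖G z‖ := by
    intro z
    simp only [hG, e1, mul_add, Complex.exp_add, norm_mul, Complex.norm_exp (a * L.ω₁), ha1,
      Real.exp_neg]
    rw [Real.exp_log (norm_pos_iff.2 h1)]
    have := norm_ne_zero_iff.2 h1
    field_simp
  have p2 : ∀ z, ‖G (z + L.ω₂)‖ = ‖G z‖ := by
    intro z
    simp only [hG, e2, mul_add, Complex.exp_add, norm_mul, Complex.norm_exp (a * L.ω₂), ha2,
      Real.exp_neg]
    rw [Real.exp_log (norm_pos_iff.2 h2)]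
    have := norm_ne_zero_iff.2 h2
    field_simp
  have per : ∀ z w, w ∈ L.lattice → ‖G (z + w)‖ = ‖G z‖ := by
    intro z w hw
    induction hw using Submodule.span_induction generalizing z with
    | mem x hx =>
      rcases hx with rfl | rfl
      · exact p1 z
      · exact p2 z
    | zero => simp
    | add x y _ _ hx hy => rw [← add_assoc, hy, hx]
    | smul n x _ hx =>
      induction n using Int.induction_on generalizing z with
      | zero => simp
      | succ k ih => rw [add_smul, ← add_assoc, one_smul, hx, ih]
      | pred k ih =>
        rw [sub_smul, one_smul, ← ih z, ← hx (z + (-(k:ℤ) • x - x))]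
        congr 2; ring
  have hb := (IsZLattice.isCompact_range_of_periodic L.lattice (fun z ↦ ‖G z‖)
    hGd.continuous.norm per).isBounded
  obtain ⟨M, hM⟩ := hb.exists_norm_le
  have hb' : Bornology.IsBounded (Set.range G) := by
    refine isBounded_iff_forall_norm_le.2 ⟨M, ?_⟩
    rintro _ ⟨z, rfl⟩
    simpa using hM _ ⟨z, rfl⟩
  refine ⟨G 0, -a, fun z ↦ ?_⟩
  rw [hGd.apply_eq_apply_of_bounded hb' 0 z]
  simp only [hG]
  rw [mul_right_comm, ← Complex.exp_add]
  simp

/-- Division of entire functions when the denominator has only simple zeros. -/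
lemma exists_quotient {f g : ℂ → ℂ} (hf : Differentiable ℂ f) (hg : Differentiable ℂ g)
    (h : ∀ z, g z = 0 → f z = 0 ∧ deriv g z ≠ 0) :
    ∃ k : ℂ → ℂ, Differentiable ℂ k ∧ ∀ z, f z = k z * g z := by
  classical
  refine ⟨fun z ↦ if g z = 0 then deriv f z / deriv g z else f z / g z, ?_, ?_⟩
  · intro z
    by_cases hz : g z = 0
    · obtain ⟨hfz, hgz⟩ := h z hz
      have df : DifferentiableAt ℂ (dslope f z) z :=
        ((Complex.differentiableOn_dslope univ_mem).2 hf.differentiableOn).differentiableAt univ_mem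
      have dg : DifferentiableAt ℂ (dslope g z) z :=
        ((Complex.differentiableOn_dslope univ_mem).2 hg.differentiableOn).differentiableAt univ_mem
      have hne : dslope g z z ≠ 0 := by rwa [dslope_same]
      refine (df.div dg hne).congr_of_eventuallyEq ?_
      filter_upwards [dg.continuousAt.eventually_ne hne] with y hy
      by_cases hyz : y = z
      · subst hyz; simp [hz, dslope_same]
      · have a1 := sub_smul_dslope f z y
        have a2 := sub_smul_dslope g z y
        rw [hfz, sub_zero, smul_eq_mul] at a1
        rw [hz, sub_zero, smul_eq_mul] at a2
        have : y - z ≠ 0 := sub_ne_zero.2 hyz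
        have : g y ≠ 0 := by rw [← a2]; exact mul_ne_zero this hy
        rw [if_neg this, ← a1, ← a2]
        simp only [Pi.div_apply]
        field_simp
    · refine ((hf z).div (hg z) hz).congr_of_eventuallyEq ?_
      filter_upwards [(hg z).continuousAt.eventually_ne hz] with y hy
      simp [hy]
  · intro z
    dsimp only
    split_ifs with hz
    · rw [hz, (h z hz).1, mul_zero]
    · field_simp

end Schneider

namespace Schneider

open Filter Topology PeriodPair

variable (L : PeriodPair)

/-! ### Differential equations and duplication -/

lemma hasDerivAt_P {z : ℂ} (hz : z ∉ L.lattice) : HasDerivAt ℘[L] (℘'[L] z) z := by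
  have := (L.analyticOnNhd_weierstrassP z hz).differentiableAt.hasDerivAt
  rwa [L.deriv_weierstrassP] at this

lemma tendsto_P_zero : Tendsto ℘[L] (𝓝[≠] 0) (Bornology.cobounded ℂ) := by
  rw [tendsto_cobounded_iff_meromorphicOrderAt_neg (L.meromorphic_weierstrassP 0),
    L.order_weierstrassP 0 (zero_mem _)]
  exact WithTop.coe_lt_coe.2 (by norm_num : (-2 : ℤ) < 0)

lemma eventually_notMem : ∀ᶠ z in 𝓝[≠] (0 : ℂ), z ∉ L.lattice := by
  have := L.compl_lattice_sdiff_singleton_mem_nhds 0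
  rw [eventually_nhdsWithin_iff]
  filter_upwards [this] with z hz hz0 hm
  exact hz ⟨hm, hz0⟩

/-- `℘` takes infinitely many values, because of its pole at the origin. -/
lemma infinite_values : (℘[L] '' (L.latticeᶜ : Set ℂ)).Infinite := by
  intro hfin
  have h1 := (tendsto_P_zero L).eventually (Bornology.isBounded_def.1 hfin.isBounded)
  obtain ⟨z, hz1, hz2⟩ := (h1.and (eventually_notMem L)).exists
  exact hz1 ⟨z, hz2, rfl⟩

lemma exists_P'_ne_zero : ∃ z, z ∉ L.lattice ∧ ℘'[L] z ≠ 0 := by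
  by_contra! h
  obtain ⟨a, ha⟩ := (isOpen_compl L).exists_is_const_of_deriv_eq_zero (isPreconnected_compl L)
    L.differentiableOn_weierstrassP (fun z hz ↦ by rw [L.deriv_weierstrassP]; exact h z hz)
  refine infinite_values L ((Set.finite_singleton a).subset ?_)
  rintro _ ⟨z, hz, rfl⟩
  exact ha z hz

/-- Differentiating `℘'² = 4℘³ - g₂℘ - g₃` gives `2℘'℘'' = (12℘² - g₂)℘'`, and the factor `℘'` may be
cancelled by the identity theorem. -/
lemma hasDerivAt_P' {z : ℂ} (hz : z ∉ L.lattice) :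
    HasDerivAt ℘'[L] (6 * ℘[L] z ^ 2 - L.g₂ / 2) z := by
  have hd : ∀ {z}, z ∉ L.lattice → HasDerivAt ℘'[L] (deriv ℘'[L] z) z := fun hz ↦
    (L.analyticOnNhd_derivWeierstrassP _ hz).differentiableAt.hasDerivAt
  have h := AnalyticOnNhd.eq_zero_or_eq_zero_of_mul_eq_zero (f := ℘'[L])
    (g := fun z ↦ deriv ℘'[L] z - (6 * ℘[L] z ^ 2 - L.g₂ / 2)) (U := (L.latticeᶜ : Set ℂ))
    L.analyticOnNhd_derivWeierstrassP ?_ ?_ (isPreconnected_compl L)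
  · rcases h with h | h
    · obtain ⟨w, hw, hne⟩ := exists_P'_ne_zero L
      exact absurd (h w hw) hne
    · have := h z hz
      rw [sub_eq_zero] at this
      rw [← this]; exact hd hz
  · have h1 : AnalyticOnNhd ℂ (deriv ℘'[L]) (L.latticeᶜ : Set ℂ) :=
      L.analyticOnNhd_derivWeierstrassP.deriv
    have h2 := L.analyticOnNhd_weierstrassP
    intro w hw
    have h1 := h1 w hw
    have h2 := h2 w hw
    fun_prop
  · intro w hw
    have e1 := (hd hw).pow 2
    have e2 := ((((hasDerivAt_P L hw).pow 3).const_mul 4).sub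
      ((hasDerivAt_P L hw).const_mul L.g₂)).sub_const L.g₃
    have e3 := e1.congr_of_eventuallyEq (f₁ := fun z ↦ 4 * ℘[L] z ^ 3 - L.g₂ * ℘[L] z - L.g₃) ?_
    · have := e3.unique e2
      simp at this
      linear_combination this / 2
    · filter_upwards [(isOpen_compl L).mem_nhds hw] with y hy
      exact (L.derivWeierstrassP_sq y hy).symm

/-- The entire function `σ²℘`. -/
def entA (z : ℂ) : ℂ := deriv (sg L) z ^ 2 - sg L z * deriv (deriv (sg L)) z

/-- The entire function `σ³℘'`. -/
def entE (z : ℂ) : ℂ := deriv (entA L) z * sg L z - 2 * entA L z * deriv (sg L) z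

lemma differentiable_sg : Differentiable ℂ (sg L) := differentiable_sigma L

lemma differentiable_sg' : Differentiable ℂ (deriv (sg L)) :=
  ((differentiable_sg L).contDiff (n := 2)).differentiable_deriv_two

lemma differentiable_sg'' : Differentiable ℂ (deriv (deriv (sg L))) :=
  ((differentiable_sg' L).contDiff (n := 2)).differentiable_deriv_two

lemma differentiable_entA : Differentiable ℂ (entA L) := by
  have h1 := differentiable_sg L
  have h2 := differentiable_sg' L
  have h3 := differentiable_sg'' L
  unfold entA; fun_prop

lemma differentiable_entE : Differentiable ℂ (entE L) := by
  have h1 := differentiable_sg L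
  have h2 := differentiable_sg' L
  have h3 := differentiable_entA L
  have h4 : Differentiable ℂ (deriv (entA L)) :=
    (h3.contDiff (n := 2)).differentiable_deriv_two
  unfold entE; fun_prop

lemma entA_eq {z : ℂ} (hz : z ∉ L.lattice) : entA L z = sg L z ^ 2 * ℘[L] z := by
  have hs := sigma_ne_zero L hz
  have h := (deriv_logDeriv_eq (differentiable_sg L) hs).unique (hasDerivAt_zt L hz)
  rw [div_eq_iff (pow_ne_zero 2 hs)] at h
  rw [entA]; linear_combination -h

lemma entE_eq {z : ℂ} (hz : z ∉ L.lattice) : entE L z = sg L z ^ 3 * ℘'[L] z := by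
  have hs := sigma_ne_zero L hz
  have h1 := ((differentiable_sg L z).hasDerivAt.pow 2).mul (hasDerivAt_P L hz)
  have h2 := h1.congr_of_eventuallyEq (f₁ := entA L) (by
    filter_upwards [(isOpen_compl L).mem_nhds hz] with y hy
    exact entA_eq L hy)
  rw [entE, h2.deriv, entA_eq L hz]
  simp
  ring

/-- The zeros of `σ` are simple: at `0` this is `σ'(0) = 1`, and quasi-periodicity transports it. -/
lemma deriv_sg_ne_zero {z : ℂ} (hz : z ∈ L.lattice) : deriv (sg L) z ≠ 0 := by
  obtain ⟨C, hC, h⟩ := sg_add L ⟨z, hz⟩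
  have h1 := congrArg (fun f ↦ deriv f 0) (funext h)
  have h2 : HasDerivAt (fun w ↦ C * cexp (eta L ⟨z, hz⟩ * w) * sg L w)
     _ 0 := ((((hasDerivAt_id (0:ℂ)).const_mul (eta L ⟨z, hz⟩)).cexp.const_mul C)).mul
      (differentiable_sg L 0).hasDerivAt
  rw [h2.deriv, deriv_comp_add_const, zero_add] at h1
  rw [h1, deriv_sigma_zero]
  simpa [sigma_zero] using hC

/-- At the half-periods `℘'` vanishes, being odd and periodic (at lattice points this is the junk
value). -/
lemma P'_half {z : ℂ} (hz : 2 * z ∈ L.lattice) : ℘'[L] z = 0 := by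
  have h1 := L.derivWeierstrassP_sub_coe z ⟨2 * z, hz⟩
  simp only at h1
  rw [show z - 2 * z = -z by ring, L.derivWeierstrassP_neg] at h1
  linear_combination -h1 / 2

lemma dense_compl2 : Dense {z : ℂ | z ∉ L.lattice ∧ 2 * z ∉ L.lattice} := by
  have h1 : Dense ((fun z : ℂ ↦ 2 * z) ⁻¹' (L.lattice : Set ℂ))ᶜ :=
    ((countable_lattice L).preimage (mul_right_injective₀ two_ne_zero)).dense_compl ℂ
  refine h1.mono ?_
  intro z hz
  exact ⟨fun h ↦ hz (by simpa [two_mul] using add_mem h h), hz⟩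

/-- The duplication formula `σ(z)⁴ ℘'(z) = C e^{az} σ(2z)`, the left-hand side being written as the
entire function `σ · σ³℘'`. The quotient by `σ(2z)` is entire, because the zeros of `σ(2z)` are
simple and `℘'` vanishes at the half-periods; it is multiplied by constants under periods, hence is
an exponential. -/
lemma duplication_sigma : ∃ C a : ℂ, C ≠ 0 ∧
    ∀ z, sg L z * entE L z = C * cexp (a * z) * sg L (2 * z) := by
  have hσ := differentiable_sg L
  have hE := differentiable_entE L
  have hN : Differentiable ℂ fun z ↦ sg L z * entE L z := hσ.mul hE
  have hD : Differentiable ℂ fun z ↦ sg L (2 * z) := by fun_prop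
  obtain ⟨k, hk, hkeq⟩ := exists_quotient hN hD (by
    intro z hz
    have hm : 2 * z ∈ L.lattice := by
      by_contra h; exact sigma_ne_zero L h hz
    constructor
    · by_cases h : z ∈ L.lattice
      · simp only [sg, sigma_eq_zero_of_mem L h, zero_mul]
      · rw [entE_eq L h, P'_half L hm]; ring
    · have h1 := ((differentiable_sg L (2 * z)).hasDerivAt).comp z
        ((hasDerivAt_id z).const_mul 2)
      have h2 : HasDerivAt (fun z ↦ sg L (2 * z)) _ z := h1
      rw [h2.deriv]
      simpa using deriv_sg_ne_zero L hm)
  have per : ∀ ω : L.lattice, ∃ c : ℂ, c ≠ 0 ∧ ∀ z, k (z + ω) = c * k z := by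
    intro ω
    obtain ⟨C, hC, h⟩ := sg_add L ω
    refine ⟨C ^ 2 * cexp (-(eta L ω * ω)),
      mul_ne_zero (pow_ne_zero 2 hC) (Complex.exp_ne_zero _), fun z ↦ ?_⟩
    refine congrFun (Continuous.ext_on (dense_compl2 L) (f := fun z ↦ k (z + ω))
      (g := fun z ↦ C ^ 2 * cexp (-(eta L ω * ω)) * k z)
      (by have := hk.continuous; fun_prop) (by have := hk.continuous; fun_prop) ?_) z
    rintro y ⟨hy, hy2⟩
    have k1 := hkeq y
    have k2 := hkeq (y + ω)
    rw [entE_eq L (add_notMem L hy ω), L.derivWeierstrassP_add_coe, h y,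
      show 2 * (y + ω) = 2 * y + ω + ω by ring, h, h] at k2
    rw [entE_eq L hy] at k1
    have hs2 := sigma_ne_zero L hy2
    have e1 : cexp (eta L ω * (2 * y + ω)) = cexp (eta L ω * y) ^ 2 * cexp (eta L ω * ω) := by
      rw [mul_add, Complex.exp_add, ← Complex.exp_nat_mul]; congr 2; push_cast; ring
    have e2 : cexp (eta L ω * (2 * y)) = cexp (eta L ω * y) ^ 2 := by
      rw [← Complex.exp_nat_mul]; congr 1; push_cast; ring
    rw [e1, e2] at k2
    have n1 := Complex.exp_ne_zero (eta L ω * y)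
    have n2 := Complex.exp_ne_zero (eta L ω * ω)
    simp only [Complex.exp_neg]
    have : k (y + ω) * (cexp (eta L ω * ω) * sg L (2 * y)) * (C ^ 2 * cexp (eta L ω * y) ^ 4)
        = C ^ 2 * k y * sg L (2 * y) * (C ^ 2 * cexp (eta L ω * y) ^ 4) := by
      linear_combination -k2 + C ^ 4 * cexp (eta L ω * y) ^ 4 * k1
    have := mul_right_cancel₀ (mul_ne_zero (pow_ne_zero 2 hC) (pow_ne_zero 4 n1)) this
    generalize cexp (eta L ω * ω) = E at *
    field_simp
    refine mul_right_cancel₀ hs2 ?_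
    linear_combination this
  obtain ⟨c1, hc1, p1⟩ := per ⟨L.ω₁, L.ω₁_mem_lattice⟩
  obtain ⟨c2, hc2, p2⟩ := per ⟨L.ω₂, L.ω₂_mem_lattice⟩
  obtain ⟨C, a, hCa⟩ := quasi L hk hc1 hc2 p1 p2
  refine ⟨C, a, ?_, fun z ↦ by rw [← hCa]; exact hkeq z⟩
  rintro rfl
  obtain ⟨z, hz, hne⟩ := exists_P'_ne_zero L
  have := hkeq z
  simp only [hCa, zero_mul] at this
  rw [entE_eq L hz] at this
  have := sigma_ne_zero L hz
  simp_all

/-- The only zeros of `℘'` are the half-periods. -/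
lemma P'_ne_zero {z : ℂ} (hz : z ∉ L.lattice) (hz2 : 2 * z ∉ L.lattice) : ℘'[L] z ≠ 0 := by
  obtain ⟨C, a, hC, h⟩ := duplication_sigma L
  intro h0
  have := h z
  rw [entE_eq L hz, h0] at this
  have h2 := sigma_ne_zero L hz2
  have := Complex.exp_ne_zero (a * z)
  simp_all

/-- The duplication formula for the zeta function: the logarithmic derivative of the one for
sigma. -/
lemma zt_dup {z : ℂ} (hz : z ∉ L.lattice) (hz2 : 2 * z ∉ L.lattice) :
    zt L (2 * z) = 2 * zt L z + (6 * ℘[L] z ^ 2 - L.g₂ / 2) / (2 * ℘'[L] z) := by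
  obtain ⟨C, a, hC, h⟩ := duplication_sigma L
  have key : ∀ z, z ∉ L.lattice → 2 * z ∉ L.lattice →
      zt L (2 * z) = 2 * zt L z + (6 * ℘[L] z ^ 2 - L.g₂ / 2) / (2 * ℘'[L] z) - a / 2 := by
    intro z hz hz2
    have d1 := ((differentiable_sg L z).hasDerivAt.pow 4).mul (hasDerivAt_P' L hz)
    have d2 := ((((hasDerivAt_id z).const_mul a).cexp).const_mul C).mul
      (((differentiable_sg L (2 * z)).hasDerivAt).comp z ((hasDerivAt_id z).const_mul 2))
    have d3 := d1.congr_of_eventuallyEq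
      (f₁ := fun z ↦ C * cexp (a * z) * sg L (2 * z)) (by
        filter_upwards [(isOpen_compl L).mem_nhds hz] with y hy
        rw [← h, entE_eq L hy]
        simp only [Pi.mul_apply, Pi.pow_apply]
        ring)
    have d4 := d3.unique d2
    have e := h z
    rw [entE_eq L hz] at e
    rw [deriv_sg L hz] at d4
    simp only [id, Function.comp, deriv_sg L hz2, Pi.pow_apply] at d4
    have n1 := sigma_ne_zero L hz
    have n2 := P'_ne_zero L hz hz2
    push_cast at d4
    have d5 : sg L z ^ 4 * (4 * zt L z * ℘'[L] z + (6 * ℘[L] z ^ 2 - L.g₂ / 2)) =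
        sg L z ^ 4 * (℘'[L] z * (a + 2 * zt L (2 * z))) := by
      norm_num at d4
      linear_combination d4 - (a + 2 * zt L (2 * z)) * e
    have d6 := mul_left_cancel₀ (pow_ne_zero 4 n1) d5
    field_simp
    linear_combination -2 * d6
  -- Comparing the formula at `z` and `-z`, the oddness of `ζ` and of `℘'` forces `a = 0`.
  have k1 := key z hz hz2
  have k2 := key (-z) (neg_notMem L hz) (by rw [mul_neg]; exact neg_notMem L hz2)
  rw [mul_neg, zt_neg, zt_neg, L.weierstrassP_neg, L.derivWeierstrassP_neg,
    mul_neg _ (℘'[L] z), div_neg, mul_neg] at k2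
  have : a = 0 := by linear_combination k1 + k2
  rw [k1, this]; ring

lemma isOpen_compl2 : IsOpen {z : ℂ | z ∉ L.lattice ∧ 2 * z ∉ L.lattice} :=
  (isOpen_compl L).inter ((isOpen_compl L).preimage (by fun_prop : Continuous fun z : ℂ ↦ 2 * z))

/-- The duplication formula for `℘`, obtained by differentiating the one for `ζ`. -/
lemma P_dup {z : ℂ} (hz : z ∉ L.lattice) (hz2 : 2 * z ∉ L.lattice) :
    ℘[L] (2 * z) = -2 * ℘[L] z + (6 * ℘[L] z ^ 2 - L.g₂ / 2) ^ 2 / (4 * ℘'[L] z ^ 2) := by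
  have n2 := P'_ne_zero L hz hz2
  have d1 := (hasDerivAt_zt L hz2).comp z ((hasDerivAt_id z).const_mul 2)
  have d2 := ((hasDerivAt_zt L hz).const_mul 2).add
    (((((hasDerivAt_P L hz).pow 2).const_mul 6).sub_const (L.g₂ / 2)).div
      ((hasDerivAt_P' L hz).const_mul 2) (mul_ne_zero two_ne_zero n2))
  have d3 := d2.congr_of_eventuallyEq (f₁ := zt L ∘ fun z ↦ 2 * z) (by
    filter_upwards [(isOpen_compl2 L).mem_nhds ⟨hz, hz2⟩] with y hy
    exact zt_dup L hy.1 hy.2)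
  have d4 := d1.unique d3
  simp only [Pi.pow_apply] at d4
  norm_num at d4
  field_simp at d4 ⊢
  linear_combination -d4

/-- The duplication formula for `℘'`, obtained by differentiating the one for `℘`. -/
lemma P'_dup {z : ℂ} (hz : z ∉ L.lattice) (hz2 : 2 * z ∉ L.lattice) :
    ℘'[L] (2 * z) = -℘'[L] z + 3 * ℘[L] z * (6 * ℘[L] z ^ 2 - L.g₂ / 2) / ℘'[L] z -
      (6 * ℘[L] z ^ 2 - L.g₂ / 2) ^ 3 / (4 * ℘'[L] z ^ 3) := by
  have n2 := P'_ne_zero L hz hz2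
  have d1 := (hasDerivAt_P L hz2).comp z ((hasDerivAt_id z).const_mul 2)
  have d2 := ((hasDerivAt_P L hz).const_mul (-2)).add
    ((((((hasDerivAt_P L hz).pow 2).const_mul 6).sub_const (L.g₂ / 2)).pow 2).div
      (((hasDerivAt_P' L hz).pow 2).const_mul 4) (mul_ne_zero (by norm_num) (pow_ne_zero 2 n2)))
  have d3 := d2.congr_of_eventuallyEq (f₁ := ℘[L] ∘ fun z ↦ 2 * z) (by
    filter_upwards [(isOpen_compl2 L).mem_nhds ⟨hz, hz2⟩] with y hy
    exact P_dup L hy.1 hy.2)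
  have d4 := d1.unique d3
  simp only [Pi.pow_apply] at d4
  norm_num at d4
  field_simp at d4 ⊢
  linear_combination d4

end Schneider

namespace Schneider

open Filter Topology PeriodPair

variable (L : PeriodPair)

/-! ### The function `αz + βζ(z)` -/

/-- The function `αz + βζ(z)`. -/
def ff (α β z : ℂ) : ℂ := α * z + β * zt L z

/-- The entire function `σ(z)(αz + βζ(z))`. -/
def entB (α β z : ℂ) : ℂ := α * z * sg L z + β * deriv (sg L) z

variable {α β : ℂ}

lemma entB_eq {z : ℂ} (hz : z ∉ L.lattice) : entB L α β z = sg L z * ff L α β z := by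
  rw [entB, ff, deriv_sg L hz]; ring

lemma differentiable_entB : Differentiable ℂ (entB L α β) := by
  have h1 := differentiable_sg L
  have h2 := differentiable_sg' L
  unfold entB; fun_prop

lemma hasDerivAt_ff {z : ℂ} (hz : z ∉ L.lattice) :
    HasDerivAt (ff L α β) (α - β * ℘[L] z) z := by
  have := ((hasDerivAt_id z).const_mul α).fun_add ((hasDerivAt_zt L hz).const_mul β)
  simpa [sub_eq_add_neg] using! this

lemma ff_add {z : ℂ} (hz : z ∉ L.lattice) (ω : L.lattice) :
    ff L α β (z + ω) = ff L α β z + (α * ω + β * eta L ω) := by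
  rw [ff, ff, zt_add L hz]; ring

/-- Some period shifts `αz + βζ(z)` by a nonzero constant. Otherwise, if `β ≠ 0`, then
`exp (αz² / (2β)) σ(z)` would be multiplied by constants under periods, hence be an exponential,
whereas `σ(0) = 0`. -/
lemma exists_shift (h : ¬(α = 0 ∧ β = 0)) : ∃ ω : L.lattice, α * ω + β * eta L ω ≠ 0 := by
  by_contra! h0
  by_cases hβ : β = 0
  · have := h0 ⟨L.ω₁, L.ω₁_mem_lattice⟩
    simp only [hβ, zero_mul, add_zero, mul_eq_zero] at this
    rcases this with h1 | h1
    · exact h ⟨h1, hβ⟩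
    · apply L.ω₁_div_two_notMem_lattice
      rw [h1]; simp
  · have hσ := differentiable_sg L
    have per : ∀ ω : L.lattice, ∃ c : ℂ, c ≠ 0 ∧ ∀ z, cexp (α / (2 * β) * (z + ω) ^ 2) *
        sg L (z + ω) = c * (cexp (α / (2 * β) * z ^ 2) * sg L z) := by
      intro ω
      obtain ⟨C, hC, hs⟩ := sg_add L ω
      refine ⟨C * cexp (α / (2 * β) * ω ^ 2), mul_ne_zero hC (Complex.exp_ne_zero _), fun z ↦ ?_⟩
      have e : eta L ω = -(α * ω / β) := by
        field_simp; linear_combination h0 ω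
      rw [hs, e]
      have : cexp (α / (2 * β) * (z + ω) ^ 2) * cexp (-(α * ω / β) * z) =
          cexp (α / (2 * β) * ω ^ 2) * cexp (α / (2 * β) * z ^ 2) := by
        rw [← Complex.exp_add, ← Complex.exp_add]; congr 1; field_simp; ring
      linear_combination C * sg L z * this
    obtain ⟨c1, hc1, p1⟩ := per ⟨L.ω₁, L.ω₁_mem_lattice⟩
    obtain ⟨c2, hc2, p2⟩ := per ⟨L.ω₂, L.ω₂_mem_lattice⟩
    obtain ⟨C, a, hCa⟩ := quasi L (g := fun z ↦ cexp (α / (2 * β) * z ^ 2) * sg L z)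
      (by fun_prop) hc1 hc2 p1 p2
    have hC : C = 0 := by
      have := hCa 0
      simpa [sg, sigma_zero] using this.symm
    have := hCa (L.ω₁ / 2)
    have n1 := sigma_ne_zero L L.ω₁_div_two_notMem_lattice
    have n2 := Complex.exp_ne_zero (α / (2 * β) * (L.ω₁ / 2) ^ 2)
    simp_all

/-- `℘` and `αz + βζ` are algebraically independent over `ℂ`: the first is periodic with
infinitely many values, while the second grows linearly along some period. -/
lemma alg_indep (h : ¬(α = 0 ∧ β = 0)) (N : ℕ) (a : ℕ → ℕ → ℂ)
    (h0 : ∀ z, z ∉ L.lattice →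
      ∑ i ∈ Finset.range N, ∑ j ∈ Finset.range N, a i j * ℘[L] z ^ i * ff L α β z ^ j = 0) :
    ∀ i < N, ∀ j < N, a i j = 0 := by
  obtain ⟨ω, hω⟩ := exists_shift L h
  set δ := α * ω + β * eta L ω
  have shift : ∀ n : ℕ, ∀ z, z ∉ L.lattice → z + n * ω ∉ L.lattice ∧
      ℘[L] (z + n * ω) = ℘[L] z ∧ ff L α β (z + n * ω) = ff L α β z + n * δ := by
    intro n z hz
    induction n with
    | zero => simpa using hz
    | succ n ih =>
      obtain ⟨i1, i2, i3⟩ := ih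
      have e : z + (n + 1 : ℕ) * ω = z + n * ω + ω := by push_cast; ring
      rw [e]
      refine ⟨add_notMem L i1 ω, by rw [L.weierstrassP_add_coe, i2], ?_⟩
      rw [ff_add L i1, i3]; push_cast; ring
  have poly : ∀ (c : ℕ → ℂ) (S : Set ℂ), S.Infinite →
      (∀ x ∈ S, ∑ i ∈ Finset.range N, c i * x ^ i = 0) → ∀ i < N, c i = 0 := by
    intro c S hS hx i hi
    set p : Polynomial ℂ := ∑ i ∈ Finset.range N, Polynomial.C (c i) * Polynomial.X ^ i with hp
    have : p = 0 := by
      refine Polynomial.eq_zero_of_infinite_isRoot p (hS.mono fun x hxS ↦ ?_)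
      simp only [Set.mem_ofPred_eq, Polynomial.IsRoot.def, hp, Polynomial.eval_finsetSum]
      simpa using hx x hxS
    have h2 := congrArg (fun q ↦ Polynomial.coeff q i) this
    simp only [hp, Polynomial.finsetSum_coeff, Polynomial.coeff_C_mul_X_pow] at h2
    simpa [hi] using h2
  -- For fixed `z`, the relation along `z + nω` is a polynomial relation in `f`, with constant `℘`.
  have step1 : ∀ z, z ∉ L.lattice → ∀ j < N, ∑ i ∈ Finset.range N, a i j * ℘[L] z ^ i = 0 := by
    intro z hz
    refine poly (fun j ↦ ∑ i ∈ Finset.range N, a i j * ℘[L] z ^ i)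
      (Set.range fun n : ℕ ↦ ff L α β z + n * δ) ?_ ?_
    · refine Set.infinite_range_of_injective fun m n hmn ↦ ?_
      simpa [hω] using hmn
    · rintro _ ⟨n, rfl⟩
      obtain ⟨s1, s2, s3⟩ := shift n z hz
      have := h0 _ s1
      rw [s2, s3, Finset.sum_comm] at this
      simpa [Finset.sum_mul] using this
  intro i hi j hj
  refine poly (fun i ↦ a i j) _ (infinite_values L) ?_ i hi
  rintro _ ⟨z, hz, rfl⟩
  exact step1 z hz j hj

/-- Cauchy estimate on the unit circle around `z`: growth of order three passes to the derivative. -/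
lemma growth_deriv {f : ℂ → ℂ} (hf : Differentiable ℂ f) {C : ℝ} (hC : 0 ≤ C)
    (h : ∀ z, ‖f z‖ ≤ Real.exp (C * (1 + ‖z‖) ^ 3)) (z : ℂ) :
    ‖deriv f z‖ ≤ Real.exp (8 * C * (1 + ‖z‖) ^ 3) := by
  have := Complex.norm_deriv_le_of_forall_mem_sphere_norm_le (c := z) (R := 1)
    (C := Real.exp (8 * C * (1 + ‖z‖) ^ 3)) one_pos hf.diffContOnCl ?_
  · simpa using this
  · intro w hw
    refine (h w).trans (Real.exp_le_exp.2 ?_)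
    have h1 : ‖w‖ ≤ ‖z‖ + 1 := by
      have : ‖w - z‖ = 1 := by simpa [dist_eq_norm] using hw
      linarith [norm_le_norm_add_norm_sub' w z]
    have h2 : (1 + ‖w‖) ^ 3 ≤ (2 * (1 + ‖z‖)) ^ 3 := by
      gcongr; linarith [norm_nonneg z]
    calc C * (1 + ‖w‖) ^ 3 ≤ C * (2 * (1 + ‖z‖)) ^ 3 := by gcongr
      _ = _ := by ring

lemma growth_all : ∃ C : ℝ, 1 ≤ C ∧ ∀ z, ‖sg L z‖ ≤ Real.exp (C * (1 + ‖z‖) ^ 3) ∧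
    ‖entA L z‖ ≤ Real.exp (C * (1 + ‖z‖) ^ 3) ∧
    ‖entB L α β z‖ ≤ Real.exp (C * (1 + ‖z‖) ^ 3) := by
  obtain ⟨C, hC, h0⟩ := sigma_growth L
  have h1 := growth_deriv (differentiable_sg L) (by linarith) h0
  have h2 := growth_deriv (differentiable_sg' L) (by linarith) h1
  refine ⟨66 * C + 1 + ‖α‖ + ‖β‖, by linarith [norm_nonneg α, norm_nonneg β], fun z ↦ ?_⟩
  have a1 := norm_nonneg α
  have a2 := norm_nonneg β
  have a3 := norm_nonneg z
  set X := (1 + ‖z‖) ^ 3 with hX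
  have hX1 : 1 ≤ X := one_le_pow₀ (by linarith)
  have hXz : ‖z‖ ≤ X := by nlinarith [pow_nonneg a3 3, pow_nonneg a3 2]
  have hCX : 1 ≤ C * X := by nlinarith
  have aX := mul_nonneg a1 (by linarith : 0 ≤ X)
  have bX := mul_nonneg a2 (by linarith : 0 ≤ X)
  refine ⟨(h0 z).trans (Real.exp_le_exp.2 (by nlinarith)), ?_, ?_⟩
  · have e : Real.exp (66 * C * X) ≤ Real.exp ((66 * C + 1 + ‖α‖ + ‖β‖) * X) :=
      Real.exp_le_exp.2 (by nlinarith)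
    refine le_trans ?_ e
    calc ‖entA L z‖ ≤ ‖deriv (sg L) z ^ 2‖ + ‖sg L z * deriv (deriv (sg L)) z‖ := norm_sub_le _ _
      _ ≤ Real.exp (8 * C * X) ^ 2 + Real.exp (C * X) * Real.exp (8 * (8 * C) * X) := by
        rw [norm_pow, norm_mul]; gcongr
        · exact h1 z
        · exact h0 z
        · exact h2 z
      _ ≤ Real.exp (65 * C * X) + Real.exp (65 * C * X) := by
        rw [← Real.exp_nat_mul, ← Real.exp_add]
        exact add_le_add (Real.exp_le_exp.2 (by push_cast; nlinarith))
          (Real.exp_le_exp.2 (by nlinarith))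
      _ ≤ Real.exp (65 * C * X) * Real.exp (C * X) := by
        have : 2 ≤ Real.exp (C * X) := by linarith [Real.add_one_le_exp (C * X)]
        nlinarith [Real.exp_pos (65 * C * X)]
      _ = _ := by rw [← Real.exp_add]; congr 1; ring
  · have e8 : Real.exp (C * X) ≤ Real.exp (8 * C * X) := Real.exp_le_exp.2 (by nlinarith)
    calc ‖entB L α β z‖ ≤ ‖α * z * sg L z‖ + ‖β * deriv (sg L) z‖ := norm_add_le _ _
      _ ≤ ‖α‖ * X * Real.exp (8 * C * X) + ‖β‖ * X * Real.exp (8 * C * X) := by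
        rw [norm_mul, norm_mul, norm_mul]
        have b1 : ‖sg L z‖ ≤ Real.exp (8 * C * X) := (h0 z).trans e8
        have b2 : ‖deriv (sg L) z‖ ≤ Real.exp (8 * C * X) := h1 z
        have b3 : ‖β‖ ≤ ‖β‖ * X := by nlinarith
        gcongr
      _ = (‖α‖ + ‖β‖) * X * Real.exp (8 * C * X) := by ring
      _ ≤ Real.exp ((‖α‖ + ‖β‖) * X) * Real.exp (8 * C * X) := by
        gcongr
        linarith [Real.add_one_le_exp ((‖α‖ + ‖β‖) * X)]
      _ ≤ _ := by
        rw [← Real.exp_add]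
        exact Real.exp_le_exp.2 (by nlinarith)

end Schneider

namespace Schneider

open Filter Topology PeriodPair

/-! ### A Schwarz lemma with several multiple zeros -/

/-- If `g` vanishes to order at least `n` at `u`, then only one term of the Leibniz formula for
the `n`-th derivative of `f * g` at `u` survives. -/
lemma iteratedDeriv_mul_of_vanish {f g : ℂ → ℂ} {u : ℂ} (hf : AnalyticAt ℂ f u)
    (hg : AnalyticAt ℂ g u) {n : ℕ} (h : ∀ i < n, iteratedDeriv i g u = 0) :
    iteratedDeriv n (fun z ↦ f z * g z) u = f u * iteratedDeriv n g u := by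
  rw [iteratedDeriv_fun_mul hf.contDiffAt hg.contDiffAt, Finset.sum_range_succ']
  simp only [Nat.choose_zero_right, Nat.cast_one, one_mul, iteratedDeriv_zero, Nat.sub_zero]
  rw [Finset.sum_eq_zero, zero_add]
  intro i hi
  rw [h _ (by have := Finset.mem_range.1 hi; omega), mul_zero]

lemma iteratedDeriv_mul_of_vanish_lt {f g : ℂ → ℂ} {u : ℂ} (hf : AnalyticAt ℂ f u)
    (hg : AnalyticAt ℂ g u) {n : ℕ} (h : ∀ i < n, iteratedDeriv i g u = 0) :
    ∀ i < n, iteratedDeriv i (fun z ↦ f z * g z) u = 0 := by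
  intro i hi
  rw [iteratedDeriv_mul_of_vanish hf hg fun j hj ↦ h j (hj.trans hi), h i hi, mul_zero]

lemma iteratedDeriv_sub_pow (u : ℂ) (n i : ℕ) :
    iteratedDeriv i (fun z ↦ (z - u) ^ n) u = if i = n then (n.factorial : ℂ) else 0 := by
  rw [iteratedDeriv_comp_sub_const i (fun z ↦ z ^ n) u]
  simp only [iteratedDeriv_pow, sub_self]
  split_ifs with h
  · subst h; simp [Nat.descFactorial_self]
  · rcases lt_or_gt_of_ne h with h | h
    · rw [zero_pow (by omega), mul_zero]
    · rw [Nat.descFactorial_of_lt h]; simp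

/-- An entire function with a zero of order at least `n` at `u` is divisible by `(z - u) ^ n`. -/
lemma exists_factor_one {G : ℂ → ℂ} (hG : Differentiable ℂ G) {u : ℂ} {n : ℕ}
    (h : (n : ℕ∞) ≤ analyticOrderAt G u) :
    ∃ H : ℂ → ℂ, Differentiable ℂ H ∧ ∀ z, G z = (z - u) ^ n * H z := by
  classical
  obtain ⟨g, hg, hev⟩ := (natCast_le_analyticOrderAt (hG.analyticAt u)).1 h
  refine ⟨fun z ↦ if z = u then g u else G z / (z - u) ^ n, ?_, ?_⟩
  · intro z
    by_cases hz : z = u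
    · subst hz
      refine hg.differentiableAt.congr_of_eventuallyEq ?_
      filter_upwards [hev] with y hy
      split_ifs with hyz
      · rw [hyz]
      · have : y - z ≠ 0 := sub_ne_zero.2 hyz
        rw [hy, smul_eq_mul]; field_simp
    · have h1 : z - u ≠ 0 := sub_ne_zero.2 hz
      have h2 : DifferentiableAt ℂ (fun z ↦ G z / (z - u) ^ n) z :=
        (hG z).div (by fun_prop) (pow_ne_zero n h1)
      refine h2.congr_of_eventuallyEq ?_
      filter_upwards [isOpen_ne.mem_nhds hz] with y hy
      simp [show y ≠ u from hy]
  · intro z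
    dsimp only
    split_ifs with hz
    · have := hev.self_of_nhds
      rw [hz]; simpa using this
    · have : z - u ≠ 0 := sub_ne_zero.2 hz
      field_simp

lemma exists_factor_all {G : ℂ → ℂ} (hG : Differentiable ℂ G) {n : ℕ} (s : Finset ℂ)
    (h : ∀ u ∈ s, (n : ℕ∞) ≤ analyticOrderAt G u) :
    ∃ H : ℂ → ℂ, Differentiable ℂ H ∧ ∀ z, G z = (∏ u ∈ s, (z - u) ^ n) * H z := by
  classical
  induction s using Finset.induction_on with
  | empty => exact ⟨G, hG, by simp⟩
  | insert a s ha ih =>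
    obtain ⟨H, hH, e⟩ := ih fun u hu ↦ h u (Finset.mem_insert_of_mem hu)
    have hp : Differentiable ℂ fun z ↦ ∏ u ∈ s, (z - u) ^ n := by fun_prop
    have e' : G = (fun z ↦ ∏ u ∈ s, (z - u) ^ n) * H := funext e
    have h0 : analyticOrderAt (fun z ↦ ∏ u ∈ s, (z - u) ^ n) a = 0 := by
      rw [(hp.analyticAt a).analyticOrderAt_eq_zero]
      refine Finset.prod_ne_zero_iff.2 fun u hu ↦ pow_ne_zero n (sub_ne_zero.2 ?_)
      rintro rfl; exact ha hu
    have ho : (n : ℕ∞) ≤ analyticOrderAt H a := by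
      have := h a (Finset.mem_insert_self a s)
      rwa [e', analyticOrderAt_mul (hp.analyticAt a) (hH.analyticAt a), h0, zero_add] at this
    obtain ⟨K, hK, eK⟩ := exists_factor_one hH ho
    refine ⟨K, hK, fun z ↦ ?_⟩
    rw [e, eK, Finset.prod_insert ha]; ring

/-- An entire function with zeros of order at least `n` at `m` points near the origin has small
`n`-th derivatives at these points: divide by the zeros and apply the maximum principle on a
large circle. -/
lemma vanish_bound {m : ℕ} {u : Fin m → ℂ} (hu : Function.Injective u) {G : ℂ → ℂ}
    (hG : Differentiable ℂ G) {n : ℕ} (hv : ∀ k, ∀ i < n, iteratedDeriv i G (u k) = 0)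
    {U : ℝ} (hU1 : 1 ≤ U) (hU : ∀ k, ‖u k‖ ≤ U) {R : ℝ} (hR : 2 * U ≤ R) {T : ℝ}
    (hT : ∀ z, ‖z‖ = R → ‖G z‖ ≤ T) (k : Fin m) :
    ‖iteratedDeriv n G (u k)‖ ≤
      n.factorial * ((2 * U) ^ (m * n) * (T * (2 / R) ^ (m * n))) := by
  classical
  have hR0 : 0 < R := by linarith
  set s : Finset ℂ := Finset.univ.image u with hs
  have hsc : s.card = m := by rw [hs, Finset.card_image_of_injective _ hu]; simp
  have hsU : ∀ x ∈ s, ‖x‖ ≤ U := by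
    intro x hx
    obtain ⟨j, _, rfl⟩ := Finset.mem_image.1 hx
    exact hU j
  obtain ⟨H, hH, e⟩ := exists_factor_all hG (n := n) s (by
    intro x hx
    obtain ⟨j, _, rfl⟩ := Finset.mem_image.1 hx
    exact (natCast_le_analyticOrderAt_iff_iteratedDeriv_eq_zero (hG.analyticAt _)).2 (hv j))
  have hHk : ‖H (u k)‖ ≤ T * (2 / R) ^ (m * n) := by
    refine Complex.norm_le_of_forall_mem_frontier_norm_le (U := Metric.ball 0 R)
      Metric.isBounded_ball hH.diffContOnCl (fun z hz ↦ ?_) (subset_closure ?_)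
    · rw [frontier_ball 0 hR0.ne'] at hz
      have hz' : ‖z‖ = R := by simpa using hz
      have h1 := hT z hz'
      rw [e, norm_mul] at h1
      have h2 : (R / 2) ^ (m * n) ≤ ‖∏ x ∈ s, (z - x) ^ n‖ := by
        rw [norm_prod]
        calc (R / 2) ^ (m * n) = ∏ x ∈ s, (R / 2) ^ n := by
              rw [Finset.prod_const, hsc, ← pow_mul, mul_comm]
          _ ≤ _ := by
              refine Finset.prod_le_prod (fun _ _ ↦ by positivity) fun x hx ↦ ?_
              rw [norm_pow]
              gcongr
              have := norm_sub_norm_le z x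
              linarith [hsU x hx]
      have h3 : (R / 2) ^ (m * n) * ‖H z‖ ≤ T := le_trans (by gcongr) h1
      have h4 : (2 / R) ^ (m * n) * (R / 2) ^ (m * n) = 1 := by
        rw [← mul_pow, show 2 / R * (R / 2) = 1 by field_simp, one_pow]
      calc ‖H z‖ = (R / 2) ^ (m * n) * ‖H z‖ * (2 / R) ^ (m * n) := by
            linear_combination -‖H z‖ * h4
        _ ≤ _ := by gcongr
    · simp only [Metric.mem_ball, dist_zero_right]
      linarith [hU k]
  have hk : u k ∈ s := Finset.mem_image_of_mem _ (Finset.mem_univ _)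
  have hp : Differentiable ℂ fun z ↦ (∏ x ∈ s.erase (u k), (z - x) ^ n) * H z := by fun_prop
  have e2 : G = fun z ↦ ((∏ x ∈ s.erase (u k), (z - x) ^ n) * H z) * (z - u k) ^ n := by
    funext z
    rw [e, ← Finset.mul_prod_erase s _ hk]; ring
  have hq : Differentiable ℂ fun z ↦ (z - u k) ^ n := by fun_prop
  rw [e2, iteratedDeriv_mul_of_vanish (f := fun z ↦ (∏ x ∈ s.erase (u k), (z - x) ^ n) * H z)
    (hp.analyticAt _) (hq.analyticAt _)
    (fun i hi ↦ by rw [iteratedDeriv_sub_pow, if_neg hi.ne]), iteratedDeriv_sub_pow, if_pos rfl,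
    norm_mul, norm_mul, mul_comm, Complex.norm_natCast]
  gcongr
  rw [norm_prod]
  calc ∏ x ∈ s.erase (u k), ‖(u k - x) ^ n‖ ≤ ∏ x ∈ s.erase (u k), (2 * U) ^ n := by
        refine Finset.prod_le_prod (fun _ _ ↦ norm_nonneg _) fun x hx ↦ ?_
        rw [norm_pow]
        gcongr
        exact (norm_sub_le _ _).trans (by
          linarith [hU k, hsU x (Finset.mem_of_mem_erase hx)])
    _ = (2 * U) ^ ((m - 1) * n) := by
        rw [Finset.prod_const, Finset.card_erase_of_mem hk, hsc, ← pow_mul, mul_comm n (m - 1)]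
    _ ≤ _ := by
        gcongr
        · linarith
        · omega

end Schneider

namespace Schneider

open Filter Topology PeriodPair

/-! ### Arithmetic of Taylor coefficients -/

open NumberField

variable {K : Type*} [Field K] [NumberField K]

/-- Control of the Taylor coefficients of `g` at `u` over the number field `K`, embedded in `ℂ` by
`φ`: all derivatives of `g` at `u` come from `K`, the `s`-th one has denominator dividing
`d ^ (s + n)`, and the series of the houses of the Taylor coefficients is bounded by `M ^ n` at
radius `r`. The weight `n` is additive under multiplication. -/
structure Good (φ : K →+* ℂ) (d : ℕ) (r M : ℝ) (n : ℕ) (g : ℂ → ℂ) (u : ℂ) : Prop where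
  analyticAt : AnalyticAt ℂ g u
  exists_coeff : ∃ c : ℕ → K, (∀ s, φ (c s) = iteratedDeriv s g u) ∧
    (∀ s, IsIntegral ℤ ((d : K) ^ (s + n) * c s)) ∧
    ∀ N, ∑ s ∈ Finset.range N, house (c s) / s.factorial * r ^ s ≤ M ^ n

lemma isIntegral_nat {K : Type*} [Field K] (n : ℕ) : IsIntegral ℤ (n : K) := by
  simpa using isIntegral_algebraMap (R := ℤ) (A := K) (x := (n : ℤ))

lemma house_one_le : house (1 : K) ≤ 1 := by
  have := house_intCast (K := K) 1
  simp at this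
  exact this.le

lemma Good.one (φ : K →+* ℂ) (d : ℕ) (r M : ℝ) (u : ℂ) :
    Good φ d r M 0 (fun _ ↦ 1) u := by
  refine ⟨analyticAt_const, fun s ↦ if s = 0 then 1 else 0, fun s ↦ ?_, fun s ↦ ?_, fun N ↦ ?_⟩
  · rw [iteratedDeriv_const]
    split_ifs <;> simp [*]
  · by_cases h : s = 0
    · simpa [h] using isIntegral_one
    · simpa [h] using isIntegral_zero
  · have h0 : house (0 : K) = 0 := by simpa using house_intCast (K := K) 0
    calc ∑ s ∈ Finset.range N, house (if s = 0 then (1 : K) else 0) / s.factorial * r ^ s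
        = ∑ s ∈ Finset.range N, if s = 0 then house (1 : K) else 0 := by
          refine Finset.sum_congr rfl fun s _ ↦ ?_
          split_ifs with h
          · simp [h]
          · simp [h0]
      _ ≤ M ^ 0 := by
          rw [Finset.sum_ite_eq', pow_zero]
          split_ifs
          · exact house_one_le
          · exact zero_le_one

/-- Stability under products: by the Leibniz formula the series of Taylor coefficients of `g₁ * g₂` is
a Cauchy product. -/
lemma Good.mul {φ : K →+* ℂ} {d : ℕ} {r M : ℝ} (hr : 0 ≤ r) {n₁ n₂ : ℕ} {g₁ g₂ : ℂ → ℂ} {u : ℂ}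
    (h₁ : Good φ d r M n₁ g₁ u) (h₂ : Good φ d r M n₂ g₂ u) :
    Good φ d r M (n₁ + n₂) (fun z ↦ g₁ z * g₂ z) u := by
  obtain ⟨a₁, c, hc1, hc2, hc3⟩ := h₁
  obtain ⟨a₂, e, he1, he2, he3⟩ := h₂
  refine ⟨a₁.mul a₂, fun s ↦ ∑ i ∈ Finset.range (s + 1), (s.choose i : K) * c i * e (s - i),
    fun s ↦ ?_, fun s ↦ ?_, fun N ↦ ?_⟩
  · rw [iteratedDeriv_fun_mul a₁.contDiffAt a₂.contDiffAt]
    simp [hc1, he1]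
  · rw [Finset.mul_sum]
    refine IsIntegral.sum _ fun i hi ↦ ?_
    have hi' : i ≤ s := Nat.lt_succ_iff.1 (Finset.mem_range.1 hi)
    have e1 : (d : K) ^ (s + (n₁ + n₂)) * ((s.choose i : K) * c i * e (s - i)) =
        (s.choose i : K) * (((d : K) ^ (i + n₁) * c i) * ((d : K) ^ (s - i + n₂) * e (s - i))) := by
      rw [show s + (n₁ + n₂) = (i + n₁) + (s - i + n₂) by omega, pow_add]; ring
    rw [e1]
    exact (isIntegral_nat _).mul ((hc2 i).mul (he2 _))
  · set x : ℕ → ℝ := fun s ↦ house (c s) / s.factorial * r ^ s with hx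
    set y : ℕ → ℝ := fun s ↦ house (e s) / s.factorial * r ^ s with hy
    have hx0 : ∀ s, 0 ≤ x s := fun s ↦ by have := house_nonneg (c s); positivity
    have hy0 : ∀ s, 0 ≤ y s := fun s ↦ by have := house_nonneg (e s); positivity
    calc _ ≤ ∑ s ∈ Finset.range N, ∑ i ∈ Finset.range (s + 1), x i * y (s - i) := by
          refine Finset.sum_le_sum fun s _ ↦ ?_
          have h1 : house (∑ i ∈ Finset.range (s + 1), (s.choose i : K) * c i * e (s - i)) ≤
              ∑ i ∈ Finset.range (s + 1), (s.choose i : ℝ) * (house (c i) * house (e (s - i))) := by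
            refine (house_sum_le_sum_house _ _).trans (Finset.sum_le_sum fun i _ ↦ ?_)
            rw [mul_assoc, house_nat_mul]
            gcongr
            exact house_mul_le _ _
          calc _ ≤ (∑ i ∈ Finset.range (s + 1),
                  (s.choose i : ℝ) * (house (c i) * house (e (s - i)))) / s.factorial * r ^ s := by
                gcongr
            _ = _ := by
                rw [Finset.sum_div, Finset.sum_mul]
                refine Finset.sum_congr rfl fun i hi ↦ ?_
                have hi' : i ≤ s := Nat.lt_succ_iff.1 (Finset.mem_range.1 hi)
                rw [Nat.cast_choose ℝ hi', hx, hy]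
                have : (s.factorial : ℝ) ≠ 0 := by positivity
                have hp : r ^ s = r ^ i * r ^ (s - i) := by rw [← pow_add]; congr 1; omega
                simp only [hp]
                field_simp
      _ = ∑ i ∈ Finset.range N, ∑ j ∈ Finset.range (N - i), x i * y j :=
          Finset.sum_range_diag_flip N fun i j ↦ x i * y j
      _ ≤ ∑ i ∈ Finset.range N, ∑ j ∈ Finset.range N, x i * y j := by
          refine Finset.sum_le_sum fun i _ ↦ Finset.sum_le_sum_of_subset_of_nonneg
            (Finset.range_subset_range.2 (Nat.sub_le _ _)) fun j _ _ ↦ mul_nonneg (hx0 i) (hy0 j)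
      _ = (∑ i ∈ Finset.range N, x i) * ∑ j ∈ Finset.range N, y j := by
          rw [Finset.sum_mul_sum]
      _ ≤ M ^ n₁ * M ^ n₂ := mul_le_mul (hc3 N) (he3 N) (Finset.sum_nonneg fun j _ ↦ hy0 j)
          ((Finset.sum_nonneg fun j _ ↦ hx0 j).trans (hc3 N))
      _ = _ := (pow_add _ _ _).symm

lemma Good.pow {φ : K →+* ℂ} {d : ℕ} {r M : ℝ} (hr : 0 ≤ r) {g : ℂ → ℂ} {u : ℂ}
    (h : Good φ d r M 1 g u) (i : ℕ) : Good φ d r M i (fun z ↦ g z ^ i) u := by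
  induction i with
  | zero => simpa using Good.one φ d r M u
  | succ i ih => simpa [pow_succ] using ih.mul hr h

lemma Good.mono {φ : K →+* ℂ} {d d' : ℕ} {r r' M M' : ℝ} {n : ℕ} {g : ℂ → ℂ} {u : ℂ}
    (h : Good φ d r M n g u) (hd : d ∣ d') (hr0 : 0 ≤ r') (hr : r' ≤ r) (hM0 : 0 ≤ M)
    (hM : M ≤ M') : Good φ d' r' M' n g u := by
  obtain ⟨a, c, hc1, hc2, hc3⟩ := h
  refine ⟨a, c, hc1, fun s ↦ ?_, fun N ↦ ?_⟩
  · obtain ⟨q, rfl⟩ := hd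
    have e1 : ((d * q : ℕ) : K) ^ (s + n) * c s = ((q ^ (s + n) : ℕ) : K) *
        ((d : K) ^ (s + n) * c s) := by push_cast; ring
    rw [e1]
    exact (isIntegral_nat _).mul (hc2 s)
  · calc _ ≤ ∑ s ∈ Finset.range N, house (c s) / s.factorial * r ^ s := by
          refine Finset.sum_le_sum fun s _ ↦ ?_
          have := house_nonneg (c s)
          gcongr
      _ ≤ M ^ n := hc3 N
      _ ≤ _ := by gcongr

/-- Geometric bounds on Taylor coefficients give a bounded series at the radius `1 / (2B)`. -/
lemma geom_partial {c : ℕ → K} {A B : ℝ} (hA : 0 ≤ A) (hB : 0 < B)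
    (h : ∀ s, house (c s) ≤ s.factorial * (A * B ^ s)) (N : ℕ) :
    ∑ s ∈ Finset.range N, house (c s) / s.factorial * (1 / (2 * B)) ^ s ≤ 2 * A := by
  calc _ ≤ ∑ s ∈ Finset.range N, A * (1 / 2 : ℝ) ^ s := by
        refine Finset.sum_le_sum fun s _ ↦ ?_
        have hf : (0 : ℝ) < s.factorial := by positivity
        calc _ ≤ (s.factorial * (A * B ^ s)) / s.factorial * (1 / (2 * B)) ^ s := by
              gcongr; exact h s
          _ = A * (B * (1 / (2 * B))) ^ s := by rw [mul_pow]; field_simp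
          _ = _ := by rw [show B * (1 / (2 * B)) = 1 / 2 by field_simp]
    _ = A * ∑ s ∈ Finset.range N, (1 / 2 : ℝ) ^ s := by rw [Finset.mul_sum]
    _ ≤ A * 2 := by
        gcongr
        exact (Summable.sum_le_tsum _ (fun _ _ ↦ by positivity) summable_geometric_two).trans
          tsum_geometric_two.le
    _ = _ := mul_comm _ _

/-- Finitely many elements of a number field have a common denominator. -/
lemma exists_denom (s : Finset K) : ∃ d : ℕ, 1 ≤ d ∧ ∀ x ∈ s, IsIntegral ℤ ((d : K) * x) := by
  classical
  induction s using Finset.induction_on with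
  | empty => exact ⟨1, le_rfl, by simp⟩
  | insert x s _ ih =>
    obtain ⟨d, hd, h⟩ := ih
    obtain ⟨y, hy, hi⟩ := ((IsFractionRing.isAlgebraic_iff ℤ ℚ K).2
        (Algebra.IsAlgebraic.isAlgebraic (R := ℚ) x)).exists_integral_multiple
    refine ⟨y.natAbs * d, Nat.mul_pos (Int.natAbs_pos.2 hy) hd, fun z hz ↦ ?_⟩
    rcases Finset.mem_insert.1 hz with rfl | hz
    · have h1 : IsIntegral ℤ ((y.natAbs : K) * z) := by
        rcases Int.natAbs_eq y with e | e
        · rw [e] at hi; simpa using hi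
        · rw [e] at hi; simpa using hi.neg
      have := (isIntegral_nat (K := K) d).mul h1
      rwa [Nat.cast_mul, mul_right_comm, mul_comm]
    · have := (isIntegral_nat (K := K) y.natAbs).mul (h z hz)
      rwa [Nat.cast_mul, mul_assoc]

end Schneider

namespace Schneider

open Filter Topology PeriodPair
open NumberField

/-! ### Taylor coefficients of `℘` and `αz + βζ(z)` -/

variable {K : Type*} [Field K] [NumberField K]

section

variable (L : PeriodPair) {u : ℂ}

lemma iteratedDeriv_P_one : iteratedDeriv 1 ℘[L] u = ℘'[L] u := by
  rw [iteratedDeriv_one, L.deriv_weierstrassP]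

lemma iteratedDeriv_P_two (hu : u ∉ L.lattice) :
    iteratedDeriv 2 ℘[L] u = 6 * ℘[L] u ^ 2 - L.g₂ / 2 := by
  rw [iteratedDeriv_succ', L.deriv_weierstrassP, iteratedDeriv_one, (hasDerivAt_P' L hu).deriv]

/-- The Taylor recursion coming from `℘''' = 12 ℘ ℘'`. -/
lemma iteratedDeriv_P (hu : u ∉ L.lattice) (s : ℕ) :
    iteratedDeriv (s + 3) ℘[L] u = 12 * ∑ i ∈ Finset.range (s + 1),
      (s.choose i : ℂ) * iteratedDeriv i ℘[L] u * iteratedDeriv (s - i + 1) ℘[L] u := by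
  have a1 : AnalyticAt ℂ ℘[L] u := L.analyticOnNhd_weierstrassP u hu
  have a2 : AnalyticAt ℂ ℘'[L] u := L.analyticOnNhd_derivWeierstrassP u hu
  have hn : ∀ᶠ z in 𝓝 u, z ∉ L.lattice := (isOpen_compl L).mem_nhds hu
  have e1 : deriv ℘'[L] =ᶠ[𝓝 u] fun z ↦ 6 * ℘[L] z ^ 2 - L.g₂ / 2 := by
    filter_upwards [hn] with z hz using (hasDerivAt_P' L hz).deriv
  have e2 : deriv (fun z ↦ 6 * ℘[L] z ^ 2 - L.g₂ / 2) =ᶠ[𝓝 u]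
      fun z ↦ 12 * (℘[L] z * ℘'[L] z) := by
    filter_upwards [hn] with z hz
    rw [((((hasDerivAt_P L hz).fun_pow 2).const_mul 6).sub_const _).deriv]
    push_cast; ring
  rw [iteratedDeriv_succ', L.deriv_weierstrassP, iteratedDeriv_succ', e1.iteratedDeriv_eq,
    iteratedDeriv_succ', e2.iteratedDeriv_eq, iteratedDeriv_const_mul_field,
    iteratedDeriv_fun_mul a1.contDiffAt a2.contDiffAt]
  simp only [iteratedDeriv_succ' (f := ℘[L]), L.deriv_weierstrassP]

variable {α β : ℂ}

lemma iteratedDeriv_ff_one (hu : u ∉ L.lattice) :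
    iteratedDeriv 1 (ff L α β) u = α - β * ℘[L] u := by
  rw [iteratedDeriv_one, (hasDerivAt_ff L hu).deriv]

/-- Since `ζ' = -℘`, the derivatives of `αz + βζ` of order at least two are those of `℘`. -/
lemma iteratedDeriv_ff (hu : u ∉ L.lattice) (s : ℕ) :
    iteratedDeriv (s + 2) (ff L α β) u = -β * iteratedDeriv (s + 1) ℘[L] u := by
  have hn : ∀ᶠ z in 𝓝 u, z ∉ L.lattice := (isOpen_compl L).mem_nhds hu
  have e1 : deriv (ff L α β) =ᶠ[𝓝 u] fun z ↦ α - β * ℘[L] z := by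
    filter_upwards [hn] with z hz using (hasDerivAt_ff L hz).deriv
  have e2 : deriv (fun z ↦ α - β * ℘[L] z) =ᶠ[𝓝 u] fun z ↦ -β * ℘'[L] z := by
    filter_upwards [hn] with z hz
    rw [(((hasDerivAt_P L hz).const_mul β).const_sub α).deriv, neg_mul]
  rw [iteratedDeriv_succ', e1.iteratedDeriv_eq, iteratedDeriv_succ', e2.iteratedDeriv_eq,
    iteratedDeriv_const_mul_field, iteratedDeriv_succ', L.deriv_weierstrassP]

lemma analyticAt_ff (hu : u ∉ L.lattice) : AnalyticAt ℂ (ff L α β) u := by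
  refine DifferentiableOn.analyticAt (s := (L.lattice : Set ℂ)ᶜ)
    (fun z hz ↦ (hasDerivAt_ff L hz).differentiableAt.differentiableWithinAt)
    ((isOpen_compl L).mem_nhds hu)

/-- Integrality and size of the derivatives of `℘` at `u`, by induction on the order through the
recursion `iteratedDeriv_P`, which is quadratic with constant coefficients: the denominator of the
`s`-th derivative divides `d ^ (s + 1)`, and the Taylor coefficients grow geometrically. -/
lemma exists_coeff_P (φ : K →+* ℂ) (hu : u ∉ L.lattice) {x₀ x₁ g : K} (h₀ : φ x₀ = ℘[L] u)
    (h₁ : φ x₁ = ℘'[L] u) (hg : φ g = L.g₂) {d : ℕ} (d₀ : IsIntegral ℤ ((d : K) * x₀))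
    (d₁ : IsIntegral ℤ ((d : K) * x₁)) (d₂ : IsIntegral ℤ ((d : K) * (6 * x₀ ^ 2 - g / 2)))
    {A : ℝ} (hA : 1 ≤ A) (A₀ : house x₀ ≤ A) (A₁ : house x₁ ≤ A)
    (A₂ : house (6 * x₀ ^ 2 - g / 2) ≤ A) (s : ℕ) :
    ∃ c : K, φ c = iteratedDeriv s ℘[L] u ∧ IsIntegral ℤ ((d : K) ^ (s + 1) * c) ∧
      house c ≤ s.factorial * (A * (12 * A) ^ s) := by
  have hd : IsIntegral ℤ (d : K) := isIntegral_nat d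
  have hB : 1 ≤ 12 * A := by linarith
  induction s using Nat.strong_induction_on with
  | h s ih =>
    match s with
    | 0 => exact ⟨x₀, by simpa using h₀, by simpa using d₀, by simpa using A₀⟩
    | 1 =>
      refine ⟨x₁, by rw [h₁, iteratedDeriv_P_one L], ?_, ?_⟩
      · rw [show (d : K) ^ (1 + 1) * x₁ = d * (d * x₁) by ring]
        exact hd.mul d₁
      · simp; nlinarith
    | 2 =>
      refine ⟨6 * x₀ ^ 2 - g / 2, ?_, ?_, ?_⟩
      · rw [iteratedDeriv_P_two L hu]; simp [h₀, hg, map_ofNat φ 6, map_ofNat φ 2]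
      · rw [show (d : K) ^ (2 + 1) * (6 * x₀ ^ 2 - g / 2) =
          d ^ 2 * (d * (6 * x₀ ^ 2 - g / 2)) by ring]
        exact (hd.pow 2).mul d₂
      · have : 1 ≤ (12 * A) ^ 2 := one_le_pow₀ hB
        simp [Nat.factorial]; nlinarith
    | s + 3 =>
      have ih' : ∀ t, ∃ c : K, t < s + 3 → φ c = iteratedDeriv t ℘[L] u ∧
          IsIntegral ℤ ((d : K) ^ (t + 1) * c) ∧
          house c ≤ t.factorial * (A * (12 * A) ^ t) := fun t ↦ by
        by_cases ht : t < s + 3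
        · obtain ⟨c, hc⟩ := ih t ht
          exact ⟨c, fun _ ↦ hc⟩
        · exact ⟨0, fun h ↦ absurd h ht⟩
      choose c hc using ih'
      refine ⟨(12 : ℕ) * ∑ i ∈ Finset.range (s + 1), (s.choose i : K) * (c i * c (s - i + 1)),
        ?_, ?_, ?_⟩
      · rw [iteratedDeriv_P L hu, map_mul, map_sum, map_natCast]
        push_cast
        congr 1
        refine Finset.sum_congr rfl fun i hi ↦ ?_
        have hi' := Finset.mem_range.1 hi
        rw [map_mul, map_mul, map_natCast, (hc i (by omega)).1, (hc (s - i + 1) (by omega)).1,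
          mul_assoc]
      · rw [mul_left_comm, Finset.mul_sum]
        refine (isIntegral_nat 12).mul (IsIntegral.sum _ fun i hi ↦ ?_)
        have hi' := Finset.mem_range.1 hi
        have e1 : (d : K) ^ (s + 3 + 1) * ((s.choose i : K) * (c i * c (s - i + 1))) =
            (s.choose i : K) * (d * (((d : K) ^ (i + 1) * c i) *
              ((d : K) ^ (s - i + 1 + 1) * c (s - i + 1)))) := by
          rw [show s + 3 + 1 = 1 + (i + 1) + (s - i + 1 + 1) by omega, pow_add, pow_add]; ring
        rw [e1]
        exact (isIntegral_nat _).mul (hd.mul ((hc i (by omega)).2.1.mul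
          (hc (s - i + 1) (by omega)).2.1))
      · have hterm : ∀ i ∈ Finset.range (s + 1),
            house ((s.choose i : K) * (c i * c (s - i + 1))) ≤
              s.factorial * (s + 1) * (A ^ 2 * (12 * A) ^ (s + 1)) := fun i hi ↦ by
          have hi' := Finset.mem_range.1 hi
          have hle : i ≤ s := by omega
          have hsi : ((s - i : ℕ) : ℝ) + 1 ≤ s + 1 := by
            have : ((s - i : ℕ) : ℝ) ≤ s := by exact_mod_cast Nat.sub_le _ _
            linarith
          have hch : (s.choose i : ℝ) * i.factorial * (s - i).factorial = s.factorial := by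
            exact_mod_cast Nat.choose_mul_factorial_mul_factorial hle
          rw [house_nat_mul]
          calc _ ≤ (s.choose i : ℝ) * (house (c i) * house (c (s - i + 1))) := by
                gcongr; exact house_mul_le _ _
            _ ≤ (s.choose i : ℝ) * ((i.factorial * (A * (12 * A) ^ i)) *
                ((s - i + 1).factorial * (A * (12 * A) ^ (s - i + 1)))) := by
                have h1 := (hc i (by omega)).2.2
                have h2 := (hc (s - i + 1) (by omega)).2.2
                have := house_nonneg (c i)
                have := house_nonneg (c (s - i + 1))
                gcongr
            _ = ((s.choose i : ℝ) * i.factorial * (s - i).factorial) * (((s - i : ℕ) : ℝ) + 1) *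
                (A ^ 2 * (12 * A) ^ (s + 1)) := by
                rw [Nat.factorial_succ, show s + 1 = i + (s - i + 1) by omega, pow_add]
                push_cast
                rw [show s - i = i + (s - i + 1) - 1 - i by omega]
                ring
            _ ≤ _ := by
                rw [hch]
                gcongr
        rw [house_nat_mul]
        calc _ ≤ (12 : ℝ) * ∑ i ∈ Finset.range (s + 1),
              ((s.factorial : ℝ) * (s + 1) * (A ^ 2 * (12 * A) ^ (s + 1))) := by
              push_cast
              gcongr
              exact (house_sum_le_sum_house _ _).trans (Finset.sum_le_sum hterm)
          _ = ((s + 1) * (s + 1) * s.factorial) * (A * (12 * A) ^ (s + 2)) := by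
              rw [Finset.sum_const, Finset.card_range, nsmul_eq_mul]
              push_cast; ring
          _ ≤ ((s + 3) * (s + 2) * (s + 1) * s.factorial) * (A * (12 * A) ^ (s + 3)) := by
              gcongr ?_ * _ * (A * ?_)
              · have hs0 : (0 : ℝ) ≤ s := Nat.cast_nonneg s
                nlinarith [mul_nonneg hs0 hs0, mul_nonneg (mul_nonneg hs0 hs0) hs0]
              · exact pow_le_pow_right₀ hB (by omega)
          _ = _ := by
              simp only [Nat.factorial_succ]
              push_cast; ring

/-- If `℘(u)`, `℘'(u)`, `f(u)`, `g₂`, `α` and `β` lie in `K`, then the Taylor coefficients of `℘`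
and of `f = αz + βζ(z)` at `u` are under arithmetic control. -/
lemma exists_good (φ : K →+* ℂ) (hu : u ∉ L.lattice) {x₀ x₁ y₀ g a b : K} (h₀ : φ x₀ = ℘[L] u)
    (h₁ : φ x₁ = ℘'[L] u) (hy : φ y₀ = ff L α β u) (hg : φ g = L.g₂) (ha : φ a = α)
    (hb : φ b = β) : ∃ (d : ℕ) (r M : ℝ), 1 ≤ d ∧ 0 < r ∧ 1 ≤ M ∧ Good φ d r M 1 ℘[L] u ∧
      Good φ d r M 1 (ff L α β) u := by
  classical
  obtain ⟨d, hd1, hd⟩ := exists_denom ({x₀, x₁, 6 * x₀ ^ 2 - g / 2, y₀, a, b} : Finset K)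
  have hdI : IsIntegral ℤ (d : K) := isIntegral_nat d
  have nn := fun x : K ↦ house_nonneg x
  set A : ℝ := 1 + house x₀ + house x₁ + house (6 * x₀ ^ 2 - g / 2) with hA
  have hA1 : 1 ≤ A := by linarith [nn x₀, nn x₁, nn (6 * x₀ ^ 2 - g / 2)]
  choose c hc1 hc2 hc3 using exists_coeff_P L φ hu h₀ h₁ hg (hd x₀ (by simp)) (hd x₁ (by simp))
    (hd (6 * x₀ ^ 2 - g / 2) (by simp)) hA1
    (by linarith [nn x₁, nn (6 * x₀ ^ 2 - g / 2)]) (by linarith [nn x₀, nn (6 * x₀ ^ 2 - g / 2)])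
    (by linarith [nn x₀, nn x₁])
  set B := 12 * A with hB
  have hB1 : 1 ≤ B := by linarith
  set A' : ℝ := house y₀ + house a + house b * A with hA'
  have hA'0 : 0 ≤ A' := by have := nn b; have := nn a; have := nn y₀; positivity
  have hc0 : c 0 = x₀ := φ.injective (by rw [hc1, h₀, iteratedDeriv_zero])
  let e : ℕ → K := fun s ↦ match s with
    | 0 => y₀
    | 1 => a - b * x₀
    | s + 2 => -b * c (s + 1)
  have he1 : ∀ s, φ (e s) = iteratedDeriv s (ff L α β) u
    | 0 => by simpa [e] using hy
    | 1 => by simp [e, iteratedDeriv_ff_one L hu, ha, hb, h₀]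
    | s + 2 => by simp [e, iteratedDeriv_ff L hu, hb, hc1]
  have he2 : ∀ s, IsIntegral ℤ ((d : K) ^ (s + 1) * e s)
    | 0 => by simpa [e] using hd y₀ (by simp)
    | 1 => by
      have h := (hdI.mul (hd a (by simp))).sub ((hd b (by simp)).mul (hd x₀ (by simp)))
      rw [show (d : K) * (d * a) - d * b * (d * x₀) = d ^ (1 + 1) * (a - b * x₀) by ring] at h
      exact h
    | s + 2 => by
      have h := ((hd b (by simp)).mul (hc2 (s + 1))).neg
      rw [show -((d : K) * b * (d ^ (s + 1 + 1) * c (s + 1))) =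
        d ^ (s + 2 + 1) * (-b * c (s + 1)) by ring] at h
      exact h
  have hneg : ∀ x y : K, house (-x * y) ≤ house x * house y := fun x y ↦ by
    have h1 : house (-x * y) = house (x * y) := by rw [neg_mul, house, house, map_neg, norm_neg]
    rw [h1]; exact house_mul_le _ _
  have he3 : ∀ s, house (e s) ≤ s.factorial * (A' * B ^ s)
    | 0 => by
      have := nn b; have := nn a
      have : 0 ≤ house b * A := by positivity
      simp [e]; linarith
    | 1 => by
      have hb0 := nn b
      have h1 : house (a - b * x₀) ≤ house a + house b * A := by
        rw [show a - b * x₀ = a + -b * x₀ by ring]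
        refine (house_add_le _ _).trans ?_
        gcongr
        refine (hneg _ _).trans ?_
        gcongr
        linarith [nn x₁, nn (6 * x₀ ^ 2 - g / 2)]
      have h2 : A' ≤ A' * B := le_mul_of_one_le_right hA'0 hB1
      have := nn y₀
      simp [e]; linarith
    | s + 2 => by
      have hb0 := nn b
      calc house (e (s + 2)) ≤ house b * ((s + 1).factorial * (A * B ^ (s + 1))) :=
            (hneg _ _).trans (by gcongr; exact hc3 _)
        _ = (s + 1).factorial * ((house b * A) * B ^ (s + 1)) := by ring
        _ ≤ (s + 2).factorial * (A' * B ^ (s + 2)) := by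
            have h1 : house b * A ≤ A' := by linarith [nn a, nn y₀]
            have h2 : B ^ (s + 1) ≤ B ^ (s + 2) := pow_le_pow_right₀ hB1 (by omega)
            gcongr ?_ * (?_ * ?_)
            exact_mod_cast Nat.factorial_le (by omega)
  have hB0 : 0 < B := by linarith
  have key1 := geom_partial (by linarith) hB0 hc3
  have key2 := geom_partial hA'0 hB0 he3
  refine ⟨d, 1 / (2 * B), 2 * A + 2 * A', hd1, by positivity, by linarith,
    ⟨L.analyticOnNhd_weierstrassP u hu, c, hc1, hc2, fun N ↦ ?_⟩,
    ⟨analyticAt_ff L hu, e, he1, he2, fun N ↦ ?_⟩⟩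
  · rw [pow_one]; linarith [key1 N]
  · rw [pow_one]; linarith [key2 N]

end

end Schneider

namespace Schneider

open Filter Topology PeriodPair
open NumberField

variable {K : Type*} [Field K] [NumberField K]

/-! ### Siegel's lemma and the Liouville inequality -/

open Module in
/-- The Liouville inequality for a nonzero algebraic integer. -/
lemma liouville (φ : K →+* ℂ) {x : K} (hx : IsIntegral ℤ x) (h0 : x ≠ 0) :
    1 ≤ ‖φ x‖ * house x ^ (finrank ℚ K - 1) := by
  refine le_trans ?_ (norm_norm_le_norm_mul_house_pow x φ)
  obtain ⟨y, hy⟩ := IsIntegrallyClosed.isIntegral_iff.1 (Algebra.isIntegral_norm ℚ hx)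
  have hy0 : y ≠ 0 := by
    rintro rfl
    rw [map_zero] at hy
    exact h0 (Algebra.norm_eq_zero_iff.1 hy.symm)
  rw [← hy]
  simp only [algebraMap_int_eq, eq_intCast]
  have : (1 : ℝ) ≤ |(y : ℝ)| := by exact_mod_cast Int.one_le_abs hy0
  simpa [Int.norm_eq_abs] using this

/-- Siegel's lemma over `𝓞 K` with twice as many unknowns as equations. -/
lemma siegel (K : Type*) [Field K] [NumberField K] : ∃ C : ℝ, 1 ≤ C ∧
    ∀ (ι κ : Type) [Fintype ι] [Fintype κ] (a : Matrix ι κ (𝓞 K)) (p : ℕ), 0 < p →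
      Fintype.card ι = p → Fintype.card κ = 2 * p → ∀ A : ℝ, 1 ≤ A →
      (∀ k l, house (a k l : K) ≤ A) →
      ∃ ξ : κ → 𝓞 K, ξ ≠ 0 ∧ a.mulVec ξ = 0 ∧ ∀ l, house (ξ l : K) ≤ C * p * A := by
  classical
  have key : ∃ c : ℝ, ∀ (ι κ : Type) [Fintype ι] [Fintype κ] (a : Matrix ι κ (𝓞 K)) (p q : ℕ),
      0 < p → p < q → Fintype.card ι = p → Fintype.card κ = q → ∀ A : ℝ,
      (∀ k l, house (algebraMap (𝓞 K) K (a k l)) ≤ A) → a ≠ 0 →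
      ∃ ξ : κ → 𝓞 K, ξ ≠ 0 ∧ a.mulVec ξ = 0 ∧
        ∀ l, house (ξ l).1 ≤ c * ((c * q * A) ^ ((p : ℝ) / (q - p))) :=
    ⟨_, fun ι κ _ _ a p q hp hpq h1 h2 A habs ha ↦
      house.exists_ne_zero_int_vec_house_le K a ha hp hpq h2 habs h1⟩
  obtain ⟨c, hc⟩ := key
  refine ⟨max 1 (2 * c ^ 2), le_max_left _ _, fun ι κ _ _ a p hp h1 h2 A hA habs ↦ ?_⟩
  have hp1 : (1 : ℝ) ≤ p := by exact_mod_cast hp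
  by_cases ha : a = 0
  · subst ha
    have : Nonempty κ := Fintype.card_pos_iff.1 (by omega)
    refine ⟨fun _ ↦ 1, fun h ↦ one_ne_zero (congrFun h (Classical.arbitrary κ)), by simp,
      fun l ↦ ?_⟩
    simp only [map_one]
    refine house_one_le.trans ?_
    have : (1 : ℝ) ≤ max 1 (2 * c ^ 2) := le_max_left _ _
    exact one_le_mul_of_one_le_of_one_le (one_le_mul_of_one_le_of_one_le this hp1) hA
  · obtain ⟨ξ, h3, h4, h5⟩ := hc ι κ a p (2 * p) hp (by omega) h1 h2 A habs ha
    refine ⟨ξ, h3, h4, fun l ↦ (h5 l).trans ?_⟩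
    have e : (p : ℝ) / ((2 * p : ℕ) - p) = 1 := by
      push_cast
      rw [show (2 : ℝ) * p - p = p by ring, div_self (by positivity)]
    rw [e, Real.rpow_one]
    calc c * (c * (2 * p : ℕ) * A) = (2 * c ^ 2) * p * A := by push_cast; ring
      _ ≤ _ := by gcongr; exact le_max_right _ _

/-- The auxiliary coefficients: a nontrivial family `ξ` killing all derivatives of order less than
`S = 2mt²` at the `m` points, for `N × N` unknowns with `N = 2mt`, so that `N² = 2mS`. -/
lemma exists_small_solution {m : ℕ} (hm : 1 ≤ m) {d : ℕ} (hd1 : 1 ≤ d) {C₀ : ℝ}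
    (hC₀ : 1 ≤ C₀) (hd : (d : ℝ) ≤ C₀)
    (c : Fin m → ℕ → ℕ → ℕ → K)
    (hI : ∀ k i j s, IsIntegral ℤ ((d : K) ^ (s + (i + j)) * c k i j s))
    (hH : ∀ k i j s, house (c k i j s) ≤ s.factorial * C₀ ^ (s + (i + j))) :
    ∃ C : ℝ, 1 ≤ C ∧ ∀ t : ℕ, 1 ≤ t → ∃ ξ : ℕ → ℕ → K, (∀ i j, IsIntegral ℤ (ξ i j)) ∧
      (∃ i < 2 * m * t, ∃ j < 2 * m * t, ξ i j ≠ 0) ∧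
      (∀ i j, house (ξ i j) ≤ C ^ (2 * m * t ^ 2) * (2 * m * t ^ 2 : ℕ) ^ (2 * m * t ^ 2)) ∧
      ∀ k, ∀ s < 2 * m * t ^ 2, ∑ i ∈ Finset.range (2 * m * t), ∑ j ∈ Finset.range (2 * m * t),
        ξ i j * c k i j s = 0 := by
  obtain ⟨C₁, hC₁, hsieg⟩ := siegel K
  have hm1 : (1 : ℝ) ≤ m := by exact_mod_cast hm
  refine ⟨C₁ * m * 2 * C₀ ^ 6, ?_, fun t ht ↦ ?_⟩
  · have h1 : 1 ≤ C₁ * m := one_le_mul_of_one_le_of_one_le hC₁ hm1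
    have h2 : 1 ≤ C₀ ^ 6 := one_le_pow₀ hC₀
    have h3 : 1 ≤ C₁ * m * 2 := by linarith
    exact one_le_mul_of_one_le_of_one_le h3 h2
  set S := 2 * m * t ^ 2 with hS
  set N := 2 * m * t with hN
  have hNS : N ≤ S := by rw [hN, hS]; gcongr; nlinarith
  have hS1 : 1 ≤ S := by rw [hS]; have := Nat.mul_le_mul hm (Nat.pow_le_pow_left ht 2); nlinarith
  -- The conditions `F^{(s)}(u k) = 0`, `s < S`, cleared of denominators.
  let a : Fin m × Fin S → Fin N × Fin N → 𝓞 K := fun k l ↦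
    ⟨(d : K) ^ (S + 2 * N) * c k.1 l.1 l.2 k.2, by
      have h1 := l.1.2
      have h2 := l.2.2
      have h3 := k.2.2
      rw [show S + 2 * N = (S + 2 * N - (k.2 + (l.1 + l.2 : ℕ))) + (k.2 + (l.1 + l.2 : ℕ)) by omega,
        pow_add, mul_assoc]
      exact ((isIntegral_nat d).pow _).mul (hI _ _ _ _)⟩
  have hd0 : (0 : ℝ) ≤ d := Nat.cast_nonneg d
  have hA : ∀ k l, house (a k l : K) ≤ C₀ ^ (6 * S) * S.factorial := fun k l ↦ by
    have h1 := l.1.2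
    have h2 := l.2.2
    have h3 := k.2.2
    change house ((d : K) ^ (S + 2 * N) * c k.1 l.1 l.2 k.2) ≤ _
    rw [← Nat.cast_pow, house_nat_mul, Nat.cast_pow]
    calc _ ≤ C₀ ^ (S + 2 * N) * ((k.2 : ℕ).factorial * C₀ ^ ((k.2 : ℕ) + (l.1 + l.2 : ℕ))) := by
          have := house_nonneg (c k.1 l.1 l.2 k.2)
          gcongr
          exact hH _ _ _ _
      _ ≤ C₀ ^ (3 * S) * (S.factorial * C₀ ^ (3 * S)) := by
          have e1 : C₀ ^ (S + 2 * N) ≤ C₀ ^ (3 * S) := pow_le_pow_right₀ hC₀ (by omega)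
          have e2 : C₀ ^ ((k.2 : ℕ) + (l.1 + l.2 : ℕ)) ≤ C₀ ^ (3 * S) :=
            pow_le_pow_right₀ hC₀ (by omega)
          have e3 : ((k.2 : ℕ).factorial : ℝ) ≤ S.factorial := by
            exact_mod_cast Nat.factorial_le h3.le
          gcongr
      _ = _ := by rw [show 6 * S = 3 * S + 3 * S by ring, pow_add]; ring
  have hA1 : 1 ≤ C₀ ^ (6 * S) * S.factorial :=
    one_le_mul_of_one_le_of_one_le (one_le_pow₀ hC₀) (by exact_mod_cast Nat.factorial_pos S)
  obtain ⟨ξ, h0, h1, h2⟩ := hsieg _ _ (Matrix.of a) (m * S) (Nat.mul_pos hm hS1) (by simp)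
    (by simp [hN, hS]; ring) _ hA1 hA
  let ξ' : ℕ → ℕ → K := fun i j ↦ if h : i < N ∧ j < N then (ξ (⟨i, h.1⟩, ⟨j, h.2⟩) : K) else 0
  have hξ : ∀ i j : Fin N, ξ' i j = (ξ (i, j) : K) := fun i j ↦ by simp [ξ']
  refine ⟨ξ', fun i j ↦ ?_, ?_, fun i j ↦ ?_, fun k s hs ↦ ?_⟩
  · simp only [ξ']
    split_ifs
    · exact (ξ _).2
    · exact isIntegral_zero
  · obtain ⟨l, hl⟩ := Function.ne_iff.1 h0
    refine ⟨l.1, l.1.2, l.2, l.2.2, ?_⟩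
    rw [hξ]
    simpa using hl
  · have hB : ∀ l, house (ξ l : K) ≤ (C₁ * m * 2 * C₀ ^ 6) ^ S * (S : ℕ) ^ S := fun l ↦ by
      refine (h2 l).trans ?_
      have e1 : (S : ℝ) ≤ 2 ^ S := by exact_mod_cast Nat.lt_two_pow_self.le
      have e2 : (S.factorial : ℝ) ≤ (S : ℝ) ^ S := by exact_mod_cast Nat.factorial_le_pow S
      have e3 : C₁ * m ≤ (C₁ * m) ^ S :=
        le_self_pow₀ (one_le_mul_of_one_le_of_one_le hC₁ hm1) (by omega)
      calc C₁ * (m * S : ℕ) * (C₀ ^ (6 * S) * S.factorial)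
          = (C₁ * m) * S * (C₀ ^ (6 * S) * S.factorial) := by push_cast; ring
        _ ≤ (C₁ * m) ^ S * 2 ^ S * (C₀ ^ (6 * S) * (S : ℝ) ^ S) := by gcongr
        _ = _ := by rw [pow_mul, mul_pow, mul_pow]; ring
    simp only [ξ']
    split_ifs
    · exact hB _
    · have : house (0 : K) = 0 := by simpa using house_intCast (K := K) 0
      rw [this]; positivity
  · have h3 := congrFun h1 (k, ⟨s, hs⟩)
    have h4 : algebraMap (𝓞 K) K (∑ l, a (k, ⟨s, hs⟩) l * ξ l) = 0 := by
      have : (∑ l, a (k, ⟨s, hs⟩) l * ξ l : 𝓞 K) = 0 := h3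
      rw [this, map_zero]
    have hd0 : (d : K) ≠ 0 := by exact_mod_cast (by omega : d ≠ 0)
    have h5 : (d : K) ^ (S + 2 * N) * ∑ i ∈ Finset.range N, ∑ j ∈ Finset.range N,
        ξ' i j * c k i j s = 0 := by
      rw [← h4, map_sum, Fintype.sum_prod_type, Finset.mul_sum, Finset.sum_range]
      refine Finset.sum_congr rfl fun i _ ↦ ?_
      rw [Finset.mul_sum, Finset.sum_range]
      refine Finset.sum_congr rfl fun j _ ↦ ?_
      rw [map_mul, hξ]
      change _ = ((d : K) ^ (S + 2 * N) * c k i j s) * _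
      ring
    exact (mul_eq_zero.1 h5).resolve_left (pow_ne_zero _ hd0)

end Schneider

namespace Schneider

open Filter Topology PeriodPair

/-! ### The auxiliary function -/

section

variable (L : PeriodPair) {α β : ℂ}

/-- The auxiliary function `F = ∑ aᵢⱼ ℘ⁱ fʲ`, where `f = αz + βζ(z)` and `i, j < N`. -/
def auxF (α β : ℂ) (N : ℕ) (a : ℕ → ℕ → ℂ) (z : ℂ) : ℂ :=
  ∑ i ∈ Finset.range N, ∑ j ∈ Finset.range N, a i j * (℘[L] z ^ i * ff L α β z ^ j)

/-- The entire function `σ ^ (3N) F`, written with the entire functions `σ²℘` and `σf`. -/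
def auxG (α β : ℂ) (N : ℕ) (a : ℕ → ℕ → ℂ) (z : ℂ) : ℂ :=
  ∑ i ∈ Finset.range N, ∑ j ∈ Finset.range N,
    a i j * (entA L z ^ i * entB L α β z ^ j * sg L z ^ (3 * N - 2 * i - j))

lemma auxG_eq {z : ℂ} (hz : z ∉ L.lattice) (N : ℕ) (a : ℕ → ℕ → ℂ) :
    auxG L α β N a z = sg L z ^ (3 * N) * auxF L α β N a z := by
  rw [auxG, auxF, Finset.mul_sum]
  refine Finset.sum_congr rfl fun i hi ↦ ?_
  rw [Finset.mul_sum]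
  refine Finset.sum_congr rfl fun j hj ↦ ?_
  have hi' := Finset.mem_range.1 hi
  have hj' := Finset.mem_range.1 hj
  have e : sg L z ^ (3 * N) = (sg L z ^ 2) ^ i * sg L z ^ j * sg L z ^ (3 * N - 2 * i - j) := by
    rw [← pow_mul, ← pow_add, ← pow_add]; congr 1; omega
  rw [entA_eq L hz, entB_eq L hz, e, mul_pow, mul_pow]
  ring

lemma differentiable_auxG (N : ℕ) (a : ℕ → ℕ → ℂ) : Differentiable ℂ (auxG L α β N a) := by
  have h1 := differentiable_entA L
  have h2 := differentiable_entB L (α := α) (β := β)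
  have h3 := differentiable_sg L
  unfold auxG
  fun_prop

lemma analyticAt_auxF {u : ℂ} (hu : u ∉ L.lattice) (N : ℕ) (a : ℕ → ℕ → ℂ) :
    AnalyticAt ℂ (auxF L α β N a) u := by
  have a1 : AnalyticAt ℂ ℘[L] u := L.analyticOnNhd_weierstrassP u hu
  have a2 := analyticAt_ff L (α := α) (β := β) hu
  unfold auxF
  fun_prop

lemma iteratedDeriv_auxF {u : ℂ} (hu : u ∉ L.lattice) (N : ℕ) (a : ℕ → ℕ → ℂ) (s : ℕ) :
    iteratedDeriv s (auxF L α β N a) u = ∑ i ∈ Finset.range N, ∑ j ∈ Finset.range N,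
      a i j * iteratedDeriv s (fun z ↦ ℘[L] z ^ i * ff L α β z ^ j) u := by
  have a1 : AnalyticAt ℂ ℘[L] u := L.analyticOnNhd_weierstrassP u hu
  have a2 := analyticAt_ff L (α := α) (β := β) hu
  unfold auxF
  rw [iteratedDeriv_fun_sum fun i _ ↦ AnalyticAt.contDiffAt (by fun_prop)]
  refine Finset.sum_congr rfl fun i _ ↦ ?_
  rw [iteratedDeriv_fun_sum fun i _ ↦ AnalyticAt.contDiffAt (by fun_prop)]
  refine Finset.sum_congr rfl fun j _ ↦ ?_
  rw [iteratedDeriv_const_mul_field]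

lemma sum_norm_le {N : ℕ} {f : ℕ → ℕ → ℂ} {B : ℝ} (h : ∀ i < N, ∀ j < N, ‖f i j‖ ≤ B) :
    ‖∑ i ∈ Finset.range N, ∑ j ∈ Finset.range N, f i j‖ ≤ N ^ 2 * B := by
  calc _ ≤ ∑ i ∈ Finset.range N, ∑ j ∈ Finset.range N, B :=
        (norm_sum_le _ _).trans (Finset.sum_le_sum fun i hi ↦ (norm_sum_le _ _).trans
          (Finset.sum_le_sum fun j hj ↦ h i (Finset.mem_range.1 hi) j (Finset.mem_range.1 hj)))
    _ = _ := by simp; ring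

/-- Upper bound for the first non-vanishing derivative of the auxiliary function, by the Schwarz
lemma applied to `σ ^ (3N) F` on the circle of radius `R`. -/
lemma analytic_upper {m : ℕ} {u : Fin m → ℂ} (hinj : Function.Injective u)
    (hu : ∀ k, u k ∉ L.lattice) : ∃ C : ℝ, 1 ≤ C ∧
    ∀ (N n : ℕ) (a : ℕ → ℕ → ℂ) (X : ℝ), 0 ≤ X → (∀ i j, ‖a i j‖ ≤ X) → ∀ R : ℝ, C ≤ R →
      (∀ k, ∀ i < n, iteratedDeriv i (auxF L α β N a) (u k) = 0) → ∀ k,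
      ‖iteratedDeriv n (auxF L α β N a) (u k)‖ * R ^ (m * n) ≤
        C ^ (3 * N) * n.factorial * C ^ (m * n) *
          (N ^ 2 * (X * Real.exp (C * (1 + R) ^ 3) ^ (3 * N))) := by
  obtain ⟨C₁, hC₁, hg⟩ := growth_all L (α := α) (β := β)
  obtain ⟨U, hU⟩ : ∃ U, ∀ k, ‖u k‖ ≤ U := by
    obtain ⟨U, hU⟩ := (Set.finite_range fun k ↦ ‖u k‖).bddAbove
    exact ⟨U, fun k ↦ hU ⟨k, rfl⟩⟩
  obtain ⟨V, hV⟩ : ∃ V, ∀ k, ‖sg L (u k)‖⁻¹ ≤ V := by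
    obtain ⟨V, hV⟩ := (Set.finite_range fun k ↦ ‖sg L (u k)‖⁻¹).bddAbove
    exact ⟨V, fun k ↦ hV ⟨k, rfl⟩⟩
  set W := 1 + |U| with hW
  have hW1 : 1 ≤ W := by linarith [abs_nonneg U]
  have hUW : ∀ k, ‖u k‖ ≤ W := fun k ↦ by linarith [hU k, le_abs_self U]
  refine ⟨C₁ + 4 * W + |V|, by linarith [abs_nonneg V], fun N n a X hX ha R hR hv k ↦ ?_⟩
  set C := C₁ + 4 * W + |V| with hC
  have hCV : ∀ k, ‖sg L (u k)‖⁻¹ ≤ C := fun k ↦ by linarith [hV k, le_abs_self V]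
  have hCW : 4 * W ≤ C := by linarith [abs_nonneg V]
  have hC1 : C₁ ≤ C := by linarith [abs_nonneg V]
  have hR0 : 0 < R := by linarith
  set E := Real.exp (C * (1 + R) ^ 3) with hE
  have hE1 : 1 ≤ E := Real.one_le_exp (by positivity)
  set T : ℝ := N ^ 2 * (X * E ^ (3 * N)) with hT
  have hbound : ∀ z, ‖z‖ = R → ‖auxG L α β N a z‖ ≤ T := fun z hz ↦ by
    obtain ⟨g1, g2, g3⟩ := hg z
    rw [hz] at g1 g2 g3
    have hle : Real.exp (C₁ * (1 + R) ^ 3) ≤ E := Real.exp_le_exp.2 (by gcongr)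
    refine sum_norm_le fun i hi j hj ↦ ?_
    rw [norm_mul, norm_mul, norm_mul, norm_pow, norm_pow, norm_pow]
    gcongr
    · exact ha i j
    · calc _ ≤ E ^ i * E ^ j * E ^ (3 * N - 2 * i - j) := by
            gcongr
            · exact g2.trans hle
            · exact g3.trans hle
            · exact g1.trans hle
        _ = E ^ (i + j + (3 * N - 2 * i - j)) := by rw [pow_add, pow_add]
        _ ≤ _ := pow_le_pow_right₀ hE1 (by omega)
  -- near `u k`, the entire function agrees with `σ ^ (3N) F`
  have hloc : ∀ k s, iteratedDeriv s (auxG L α β N a) (u k) =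
      iteratedDeriv s (fun z ↦ sg L z ^ (3 * N) * auxF L α β N a z) (u k) := fun k s ↦ by
    refine Filter.EventuallyEq.iteratedDeriv_eq _ ?_
    filter_upwards [(isOpen_compl L).mem_nhds (hu k)] with z hz using auxG_eq L hz N a
  have hsa : ∀ k, AnalyticAt ℂ (fun z ↦ sg L z ^ (3 * N)) (u k) := fun k ↦
    ((differentiable_sg L).pow _).analyticAt _
  have hvG : ∀ k, ∀ i < n, iteratedDeriv i (auxG L α β N a) (u k) = 0 := fun k i hi ↦ by
    rw [hloc]
    exact iteratedDeriv_mul_of_vanish_lt (hsa k) (analyticAt_auxF L (hu k) N a) (hv k) i hi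
  have hmain := vanish_bound hinj (differentiable_auxG L N a) hvG hW1 hUW (R := R) (by linarith)
    hbound k
  rw [hloc, iteratedDeriv_mul_of_vanish (hsa k) (analyticAt_auxF L (hu k) N a) (hv k), norm_mul,
    norm_pow] at hmain
  have hs0 : 0 < ‖sg L (u k)‖ := norm_pos_iff.2 (sigma_ne_zero L (hu k))
  set D := ‖iteratedDeriv n (auxF L α β N a) (u k)‖ with hD
  have h1 : ‖sg L (u k)‖⁻¹ ^ (3 * N) * ‖sg L (u k)‖ ^ (3 * N) = 1 := by
    rw [← mul_pow, inv_mul_cancel₀ hs0.ne', one_pow]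
  have h2 : (2 / R) ^ (m * n) * R ^ (m * n) = 2 ^ (m * n) := by
    rw [← mul_pow, div_mul_cancel₀ _ hR0.ne']
  calc D * R ^ (m * n)
      = ‖sg L (u k)‖⁻¹ ^ (3 * N) * (‖sg L (u k)‖ ^ (3 * N) * D) * R ^ (m * n) := by
        rw [← mul_assoc, h1, one_mul]
    _ ≤ C ^ (3 * N) * (n.factorial * ((2 * W) ^ (m * n) * (T * (2 / R) ^ (m * n)))) *
        R ^ (m * n) := by
        gcongr
        exact hCV k
    _ = C ^ (3 * N) * n.factorial * (4 * W) ^ (m * n) * T := by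
        rw [show 4 * W = (2 * W) * 2 by ring, mul_pow (2 * W), ← h2]; ring
    _ ≤ _ := by gcongr

end

end Schneider

namespace Schneider

open Filter Topology PeriodPair
open NumberField

/-! ### The transcendence criterion -/

/-- The numerical contradiction: the Liouville lower bound and the Schwarz upper bound for the first
non-vanishing derivative, of order `n`, together bound `n`. The radius is `R = n^{1/6}`, so that
`N R³ = O(n)` while `R ^ (m n) = n ^ ((2h+2) n)`. -/
lemma order_bound {h m : ℕ} (hh : 1 ≤ h) (hm : m = 12 * h + 12) {C : ℝ} (hC : 1 ≤ C)
    {t n d : ℕ} (ht : 1 ≤ t) (hn : 2 * m * t ^ 2 ≤ n) (hd : (d : ℝ) ≤ C) {R D H : ℝ}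
    (hR : 1 ≤ R) (hRn : R ^ 6 = n) (hD0 : 0 ≤ D) (hH0 : 0 ≤ H)
    (hH : H ≤ (2 * m * t : ℕ) ^ 2 * ((C ^ (2 * m * t ^ 2) *
      (2 * m * t ^ 2 : ℕ) ^ (2 * m * t ^ 2)) * (n.factorial * C ^ (n + 2 * (2 * m * t)))))
    (hD : D * R ^ (m * n) ≤ C ^ (3 * (2 * m * t)) * n.factorial * C ^ (m * n) *
      ((2 * m * t : ℕ) ^ 2 * ((C ^ (2 * m * t ^ 2) * (2 * m * t ^ 2 : ℕ) ^ (2 * m * t ^ 2)) *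
        Real.exp (C * (1 + R) ^ 3) ^ (3 * (2 * m * t)))))
    (hlow : 1 ≤ ((d : ℝ) ^ (n + 2 * (2 * m * t)) * D) *
      ((d : ℝ) ^ (n + 2 * (2 * m * t)) * H) ^ (h - 1)) :
    (n : ℝ) ^ 2 ≤ (4 * m * C ^ (7 + m) * Real.exp (48 * C * m)) * (4 * m * C ^ 7) ^ (h - 1) := by
  set N := 2 * m * t with hN
  set S := 2 * m * t ^ 2 with hS
  have hm1 : 1 ≤ m := by omega
  have hNS : N ≤ S := by rw [hN, hS]; gcongr; nlinarith
  have hNn : N ≤ n := hNS.trans hn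
  have hS1 : 1 ≤ S := by rw [hS]; have := Nat.mul_le_mul hm1 (Nat.pow_le_pow_left ht 2); nlinarith
  have hn1 : 1 ≤ n := hS1.trans hn
  have hn1' : (1 : ℝ) ≤ n := by exact_mod_cast hn1
  have hm1' : (1 : ℝ) ≤ m := by exact_mod_cast hm1
  have hN2S : (N : ℝ) ^ 2 ≤ 2 * m * n := by
    have h1 : N ^ 2 = 2 * m * S := by rw [hN, hS]; ring
    have h2 : N ^ 2 ≤ 2 * m * n := by rw [h1]; gcongr
    exact_mod_cast h2
  have hN2 : (N : ℝ) ^ 2 ≤ (4 * m) ^ n := by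
    have h1 : (n : ℝ) ≤ 2 ^ n := by exact_mod_cast Nat.lt_two_pow_self.le
    have h2 : (2 * m : ℝ) ≤ (2 * m) ^ n := le_self_pow₀ (by linarith) (by omega)
    calc (N : ℝ) ^ 2 ≤ (2 * m) * n := hN2S
      _ ≤ (2 * m) ^ n * 2 ^ n := by gcongr
      _ = _ := by rw [← mul_pow]; ring
  have hX : C ^ S * (S : ℝ) ^ S ≤ C ^ n * (n : ℝ) ^ n := by
    have h1 : (S : ℝ) ^ S ≤ (n : ℝ) ^ n :=
      calc (S : ℝ) ^ S ≤ (n : ℝ) ^ S := by gcongr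
        _ ≤ _ := pow_le_pow_right₀ hn1' hn
    gcongr
  have hfac : (n.factorial : ℝ) ≤ (n : ℝ) ^ n := by exact_mod_cast Nat.factorial_le_pow n
  have hexp : Real.exp (C * (1 + R) ^ 3) ^ (3 * N) ≤ Real.exp (48 * C * m) ^ n := by
    rw [← Real.exp_nat_mul, ← Real.exp_nat_mul]
    refine Real.exp_le_exp.2 ?_
    have h1 : (1 + R) ^ 3 ≤ 8 * R ^ 3 := by
      calc (1 + R) ^ 3 ≤ (2 * R) ^ 3 := by gcongr; linarith
        _ = _ := by ring
    have h2 : (N : ℝ) * R ^ 3 ≤ 2 * m * n := by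
      refine le_of_pow_le_pow_left₀ two_ne_zero (by positivity) ?_
      calc ((N : ℝ) * R ^ 3) ^ 2 = (N : ℝ) ^ 2 * R ^ 6 := by ring
        _ ≤ (2 * m * n : ℝ) * n := by rw [hRn]; gcongr
        _ ≤ (2 * m * n : ℝ) ^ 2 := by
          have : (n : ℝ) ≤ 2 * m * n := by nlinarith
          rw [sq]; gcongr
    push_cast
    calc (3 : ℝ) * N * (C * (1 + R) ^ 3) ≤ 3 * N * (C * (8 * R ^ 3)) := by gcongr
      _ = 24 * C * (N * R ^ 3) := by ring
      _ ≤ 24 * C * (2 * m * n) := by gcongr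
      _ = _ := by ring
  set Y := Real.exp (48 * C * m) with hY
  have hCn : ∀ k, k ≤ 3 * n → C ^ k ≤ C ^ (3 * n) := fun k hk ↦ pow_le_pow_right₀ hC hk
  have hdC : (d : ℝ) ^ (n + 2 * N) ≤ C ^ (3 * n) :=
    (by gcongr : (d : ℝ) ^ (n + 2 * N) ≤ C ^ (n + 2 * N)).trans (hCn _ (by omega))
  have hP : (d : ℝ) ^ (n + 2 * N) * H ≤ (4 * m * C ^ 7) ^ n * (n : ℝ) ^ (2 * n) := by
    calc (d : ℝ) ^ (n + 2 * N) * H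
        ≤ C ^ (3 * n) * ((4 * m) ^ n * ((C ^ n * (n : ℝ) ^ n) *
          ((n : ℝ) ^ n * C ^ (3 * n)))) := by
          refine mul_le_mul hdC (hH.trans ?_) hH0 (by positivity)
          have := hCn (n + 2 * N) (by omega)
          gcongr
      _ = _ := by
          rw [show 3 * n = n * 3 by ring, show 2 * n = n * 2 by ring, pow_mul, pow_mul,
            mul_pow _ (C ^ 7), ← pow_mul C 7 n]
          ring
  have hRm : R ^ (m * n) = (n : ℝ) ^ ((2 * h + 2) * n) := by
    rw [← hRn, ← pow_mul, hm]; congr 1; ring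
  have hDD : (d : ℝ) ^ (n + 2 * N) * D * (n : ℝ) ^ ((2 * h + 2) * n) ≤
      (4 * m * C ^ (7 + m) * Y) ^ n * (n : ℝ) ^ (2 * n) := by
    rw [← hRm]
    calc (d : ℝ) ^ (n + 2 * N) * D * R ^ (m * n)
        = (d : ℝ) ^ (n + 2 * N) * (D * R ^ (m * n)) := by ring
      _ ≤ C ^ (3 * n) * (C ^ (3 * n) * (n : ℝ) ^ n * C ^ (m * n) *
          ((4 * m) ^ n * ((C ^ n * (n : ℝ) ^ n) * Y ^ n))) := by
          refine mul_le_mul hdC (hD.trans ?_) (by positivity) (by positivity)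
          have := hCn (3 * N) (by omega)
          gcongr
      _ = _ := by
          rw [mul_pow _ Y, mul_pow _ (C ^ (7 + m)), ← pow_mul C (7 + m) n,
            show (7 + m) * n = 3 * n + 3 * n + m * n + n by ring, pow_add, pow_add, pow_add,
            show 2 * n = n + n by ring, pow_add]
          ring
  set Q := 4 * m * C ^ 7 with hQ
  set Z := 4 * m * C ^ (7 + m) * Y with hZ
  have hQ0 : 0 ≤ Q := by positivity
  have hZ0 : 0 ≤ Z := by positivity
  clear_value Q Z
  have hfin : (n : ℝ) ^ ((2 * h + 2) * n) ≤ (Z * Q ^ (h - 1)) ^ n * (n : ℝ) ^ (2 * h * n) := by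
    calc (n : ℝ) ^ ((2 * h + 2) * n) = 1 * (n : ℝ) ^ ((2 * h + 2) * n) := (one_mul _).symm
      _ ≤ (((d : ℝ) ^ (n + 2 * N) * D) * ((d : ℝ) ^ (n + 2 * N) * H) ^ (h - 1)) *
          (n : ℝ) ^ ((2 * h + 2) * n) := by gcongr
      _ = ((d : ℝ) ^ (n + 2 * N) * D * (n : ℝ) ^ ((2 * h + 2) * n)) *
          ((d : ℝ) ^ (n + 2 * N) * H) ^ (h - 1) := by ring
      _ ≤ (Z ^ n * (n : ℝ) ^ (2 * n)) * (Q ^ n * (n : ℝ) ^ (2 * n)) ^ (h - 1) := by gcongr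
      _ = _ := by
          obtain ⟨h', rfl⟩ : ∃ h', h = h' + 1 := ⟨h - 1, by omega⟩
          rw [Nat.add_sub_cancel, mul_pow, mul_pow, ← pow_mul, ← pow_mul, ← pow_mul,
            show 2 * (h' + 1) * n = 2 * n + 2 * n * h' by ring, pow_add, mul_comm h' n]
          ring
  have hfin2 : ((n : ℝ) ^ 2) ^ n ≤ (Z * Q ^ (h - 1)) ^ n := by
    rw [show (2 * h + 2) * n = 2 * n + 2 * h * n by ring, pow_add, pow_mul] at hfin
    exact le_of_mul_le_mul_right hfin (by positivity)
  exact le_of_pow_le_pow_left₀ (by omega) (by positivity) hfin2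

/-- A function analytic off the lattice and not identically zero there has a first order `n` at
which one of its derivatives at the points `u k` does not vanish. -/
lemma exists_first (L : PeriodPair) {m : ℕ} (hm : 1 ≤ m) {u : Fin m → ℂ}
    (hu : ∀ k, u k ∉ L.lattice) {F : ℂ → ℂ} (hF : ∀ z ∉ L.lattice, AnalyticAt ℂ F z)
    {z₀ : ℂ} (hz₀ : z₀ ∉ L.lattice) (h0 : F z₀ ≠ 0) :
    ∃ n, (∀ k, ∀ i < n, iteratedDeriv i F (u k) = 0) ∧ ∃ k, iteratedDeriv n F (u k) ≠ 0 := by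
  classical
  have hex : ∃ n, ∃ k, iteratedDeriv n F (u k) ≠ 0 := by
    by_contra! hcon
    have hk := fun n ↦ hcon n ⟨0, hm⟩
    set u₀ := u ⟨0, hm⟩ with hu₀
    have hu0 : u₀ ∉ L.lattice := hu _
    have htop : analyticOrderAt F u₀ = ⊤ := by
      refine ENat.eq_top_iff_forall_ge.2 fun n ↦ ?_
      exact (natCast_le_analyticOrderAt_iff_iteratedDeriv_eq_zero (hF _ hu0)).2 fun i _ ↦ hk i
    have hev : F =ᶠ[𝓝 u₀] 0 := analyticOrderAt_eq_top.1 htop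
    have hFn : AnalyticOnNhd ℂ F ((L.lattice : Set ℂ)ᶜ) := fun z hz ↦ hF z hz
    exact h0 (hFn.eqOn_zero_of_preconnected_of_eventuallyEq_zero (isPreconnected_compl L) hu0 hev
      hz₀)
  refine ⟨Nat.find hex, fun k i hi ↦ ?_, Nat.find_spec hex⟩
  by_contra hne
  exact Nat.find_min hex hi ⟨k, hne⟩

variable {K : Type*} [Field K] [NumberField K]

/-- Integrality and size of a Taylor coefficient of the auxiliary function, from those of its
coefficients `ξ` and of the Taylor coefficients `c` of the monomials. -/
lemma coeff_bounds {N n d : ℕ} {C X : ℝ} (hC : 1 ≤ C) (hX : 0 ≤ X) (ξ c : ℕ → ℕ → K)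
    (hξI : ∀ i j, IsIntegral ℤ (ξ i j)) (hξX : ∀ i j, house (ξ i j) ≤ X)
    (hcI : ∀ i j, IsIntegral ℤ ((d : K) ^ (n + (i + j)) * c i j))
    (hcH : ∀ i j, house (c i j) ≤ n.factorial * C ^ (n + (i + j))) :
    IsIntegral ℤ ((d : K) ^ (n + 2 * N) *
      ∑ i ∈ Finset.range N, ∑ j ∈ Finset.range N, ξ i j * c i j) ∧
    house (∑ i ∈ Finset.range N, ∑ j ∈ Finset.range N, ξ i j * c i j) ≤
      (N : ℝ) ^ 2 * (X * (n.factorial * C ^ (n + 2 * N))) := by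
  constructor
  · simp only [Finset.mul_sum]
    refine IsIntegral.sum _ fun i hi ↦ IsIntegral.sum _ fun j hj ↦ ?_
    have hi' := Finset.mem_range.1 hi
    have hj' := Finset.mem_range.1 hj
    have e : (d : K) ^ (n + 2 * N) * (ξ i j * c i j) =
        ξ i j * ((d : K) ^ (2 * N - (i + j)) * ((d : K) ^ (n + (i + j)) * c i j)) := by
      rw [show n + 2 * N = (2 * N - (i + j)) + (n + (i + j)) by omega, pow_add]; ring
    rw [e]
    exact (hξI i j).mul (((isIntegral_nat d).pow _).mul (hcI i j))
  · calc house (∑ i ∈ Finset.range N, ∑ j ∈ Finset.range N, ξ i j * c i j)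
        ≤ ∑ i ∈ Finset.range N, ∑ j ∈ Finset.range N,
          (X * (n.factorial * C ^ (n + 2 * N))) := by
          refine (house_sum_le_sum_house _ _).trans (Finset.sum_le_sum fun i hi ↦
            (house_sum_le_sum_house _ _).trans (Finset.sum_le_sum fun j hj ↦ ?_))
          have hi' := Finset.mem_range.1 hi
          have hj' := Finset.mem_range.1 hj
          refine (house_mul_le _ _).trans (mul_le_mul (hξX i j) ((hcH i j).trans ?_)
            (house_nonneg _) hX)
          exact mul_le_mul_of_nonneg_left (pow_le_pow_right₀ hC (by omega)) (by positivity)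
      _ = _ := by
          simp only [Finset.sum_const, Finset.card_range, nsmul_eq_mul]; ring

/-- The Taylor coefficients of the monomials `℘ⁱ fʲ` at the points `u k`, as elements of `K`, with
geometric bounds for denominators and houses. -/
lemma exists_monomial_coeffs (L : PeriodPair) {α β : ℂ} (φ : K →+* ℂ) {m : ℕ} {u : Fin m → ℂ}
    {d : ℕ} {r M : ℝ} (hr : 0 < r) (hM : 1 ≤ M)
    (hP : ∀ k, Good φ d r M 1 ℘[L] (u k)) (hf : ∀ k, Good φ d r M 1 (ff L α β) (u k)) :
    ∃ (c : Fin m → ℕ → ℕ → ℕ → K) (C : ℝ), 1 ≤ C ∧ (d : ℝ) ≤ C ∧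
      (∀ k i j s, φ (c k i j s) =
        iteratedDeriv s (fun z ↦ ℘[L] z ^ i * ff L α β z ^ j) (u k)) ∧
      (∀ k i j s, IsIntegral ℤ ((d : K) ^ (s + (i + j)) * c k i j s)) ∧
      ∀ k i j s, house (c k i j s) ≤ s.factorial * C ^ (s + (i + j)) := by
  have hgood : ∀ k i j, Good φ d r M (i + j) (fun z ↦ ℘[L] z ^ i * ff L α β z ^ j) (u k) :=
    fun k i j ↦ ((hP k).pow hr.le i).mul hr.le ((hf k).pow hr.le j)
  choose c hc1 hc2 hc3 using fun k i j ↦ (hgood k i j).exists_coeff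
  have hd0 : (0 : ℝ) ≤ d := by positivity
  have hri : 0 < r⁻¹ := inv_pos.2 hr
  refine ⟨c, d + r⁻¹ + M, by linarith, by linarith, hc1, hc2, fun k i j s ↦ ?_⟩
  set C₀ := d + r⁻¹ + M with hC₀
  have h2 : r⁻¹ ≤ C₀ := by linarith
  have h3 : M ≤ C₀ := by linarith
  have h0 : 0 ≤ C₀ := by linarith
  clear_value C₀
  have h1 : house (c k i j s) / s.factorial * r ^ s ≤ M ^ (i + j) := by
    refine le_trans ?_ (hc3 k i j (s + 1))
    refine Finset.single_le_sum (f := fun s ↦ house (c k i j s) / s.factorial * r ^ s)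
      (fun s _ ↦ ?_) (Finset.self_mem_range_succ s)
    have := house_nonneg (c k i j s)
    positivity
  have hs : (0 : ℝ) < s.factorial := by positivity
  calc house (c k i j s) = s.factorial *
        ((r⁻¹) ^ s * (house (c k i j s) / s.factorial * r ^ s)) := by
        rw [inv_pow]; field_simp
    _ ≤ s.factorial * (C₀ ^ s * C₀ ^ (i + j)) := by
        have h4 : 0 ≤ house (c k i j s) / s.factorial * r ^ s := by
          have := house_nonneg (c k i j s)
          positivity
        have h5 := h1.trans (by gcongr : M ^ (i + j) ≤ C₀ ^ (i + j))
        gcongr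
    _ = _ := by rw [pow_add C₀ s]

open Module in
/-- The functions `℘` and `f = αz + βζ(z)`, with `(α, β) ≠ (0, 0)`, cannot have their Taylor
coefficients under arithmetic control, over a number field of degree `h`, at `12h + 12` points. -/
lemma criterion (L : PeriodPair) {α β : ℂ} (hαβ : ¬(α = 0 ∧ β = 0)) (φ : K →+* ℂ)
    {h m : ℕ} (hh : finrank ℚ K = h) (hm : m = 12 * h + 12) {u : Fin m → ℂ}
    (hinj : Function.Injective u) (hu : ∀ k, u k ∉ L.lattice) {d : ℕ} {r M : ℝ} (hd : 1 ≤ d)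
    (hr : 0 < r) (hM : 1 ≤ M)
    (hP : ∀ k, Good φ d r M 1 ℘[L] (u k)) (hf : ∀ k, Good φ d r M 1 (ff L α β) (u k)) :
    False := by
  have hh1 : 1 ≤ h := hh ▸ finrank_pos
  have hm1 : 1 ≤ m := by omega
  obtain ⟨c, C₀, hC₀1, hdC₀, hc1, hc2, hH⟩ := exists_monomial_coeffs L φ hr hM hP hf
  obtain ⟨C₁, hC₁, hsmall⟩ := exists_small_solution hm1 hd hC₀1 hdC₀ c hc2 hH
  obtain ⟨C₂, hC₂, hupper⟩ := analytic_upper L (α := α) (β := β) hinj hu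
  clear hP hf
  -- a common upper bound `C` for the three constants
  obtain ⟨C, hC0, hC1', hC2⟩ : ∃ C, C₀ ≤ C ∧ C₁ ≤ C ∧ C₂ ≤ C :=
    ⟨C₀ + C₁ + C₂, by linarith only [hC₁, hC₂], by linarith only [hC₀1, hC₂],
      by linarith only [hC₀1, hC₁]⟩
  have hC1 : 1 ≤ C := hC₀1.trans hC0
  have hC00 : 0 ≤ C₀ := zero_le_one.trans hC₀1
  have hC10 : 0 ≤ C₁ := zero_le_one.trans hC₁
  -- The parameter `t` exceeds the bound of `order_bound` on `n²`, hence on `n`, which in turn is at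
  -- least `t`; and `t ≥ C ^ 6` makes the radius `n ^ (1/6)` admissible in `analytic_upper`.
  obtain ⟨t, ht1, htC, htB⟩ : ∃ t : ℕ, 1 ≤ t ∧ C ^ 6 ≤ t ∧
      (4 * m * C ^ (7 + m) * Real.exp (48 * C * m)) * (4 * m * C ^ 7) ^ (h - 1) < t := by
    obtain ⟨t, ht⟩ := exists_nat_gt (max (C ^ 6) ((4 * m * C ^ (7 + m) *
      Real.exp (48 * C * m)) * (4 * m * C ^ 7) ^ (h - 1)))
    have h1 := (le_max_left _ _).trans_lt ht
    exact ⟨t, by exact_mod_cast (one_le_pow₀ hC1).trans h1.le, h1.le,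
      (le_max_right _ _).trans_lt ht⟩
  obtain ⟨ξ, hξI, ⟨i₀, hi₀, j₀, hj₀, hξ0⟩, hξH, hξS⟩ := hsmall t ht1
  clear hsmall
  obtain ⟨F, hF⟩ : ∃ F, F = auxF L α β (2 * m * t) fun i j ↦ φ (ξ i j) := ⟨_, rfl⟩
  have hFn : ∀ z ∉ L.lattice, AnalyticAt ℂ F z := fun z hz ↦ hF ▸ analyticAt_auxF L hz _ _
  obtain ⟨z₀, hz₀, hFz₀⟩ : ∃ z, z ∉ L.lattice ∧ F z ≠ 0 := by
    by_contra! hcon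
    have := alg_indep L hαβ (2 * m * t) (fun i j ↦ φ (ξ i j)) (fun z hz ↦ by
      have := hcon z hz
      rw [hF, auxF] at this
      simpa only [mul_assoc] using this) i₀ hi₀ j₀ hj₀
    exact hξ0 (φ.injective (by rw [map_zero]; exact this))
  obtain ⟨n, hn1, k, hn2⟩ := exists_first L hm1 hu hFn hz₀ hFz₀
  have hγ : ∀ k s, φ (∑ i ∈ Finset.range (2 * m * t), ∑ j ∈ Finset.range (2 * m * t),
      ξ i j * c k i j s) = iteratedDeriv s F (u k) := fun k s ↦ by
    rw [hF, iteratedDeriv_auxF L (hu k)]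
    simp only [map_sum, map_mul, hc1]
  have hnS : 2 * m * t ^ 2 ≤ n := by
    by_contra! hlt
    exact hn2 (by rw [← hγ, hξS k n hlt, map_zero])
  have htn : t ≤ n := by
    refine le_trans ?_ hnS
    calc t = t * 1 := (mul_one t).symm
      _ ≤ t * (2 * m * t) := Nat.mul_le_mul_left t
          (Nat.mul_pos (Nat.mul_pos two_pos hm1) ht1)
      _ = 2 * m * t ^ 2 := by ring
  have htn' : (t : ℝ) ≤ n := by exact_mod_cast htn
  obtain ⟨R, hR0, hR6⟩ : ∃ R : ℝ, 0 ≤ R ∧ R ^ 6 = n :=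
    ⟨(n : ℝ) ^ ((1 : ℝ) / 6), by positivity, by
      rw [← Real.rpow_natCast, ← Real.rpow_mul (by positivity)]; norm_num⟩
  have hCR : C ≤ R :=
    le_of_pow_le_pow_left₀ (by norm_num : (6 : ℕ) ≠ 0) hR0 (by rw [hR6]; exact htC.trans htn')
  obtain ⟨X, hX⟩ : ∃ X : ℝ, X = C ^ (2 * m * t ^ 2) * (2 * m * t ^ 2 : ℕ) ^ (2 * m * t ^ 2) :=
    ⟨_, rfl⟩
  have hξX : ∀ i j, house (ξ i j) ≤ X := fun i j ↦ (hξH i j).trans (by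
    rw [hX]
    exact mul_le_mul_of_nonneg_right (pow_le_pow_left₀ hC10 hC1' _) (by positivity))
  have hX0 : 0 ≤ X := (house_nonneg _).trans (hξX 0 0)
  obtain ⟨hgI, hgH⟩ := coeff_bounds (N := 2 * m * t) hC1 hX0 ξ (fun i j ↦ c k i j n) hξI hξX
    (fun i j ↦ hc2 k i j n) (fun i j ↦ (hH k i j n).trans
      (mul_le_mul_of_nonneg_left (pow_le_pow_left₀ hC00 hC0 _) (by positivity)))
  have hφg := hγ k n
  generalize ∑ i ∈ Finset.range (2 * m * t), ∑ j ∈ Finset.range (2 * m * t),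
    ξ i j * c k i j n = g at hgI hgH hφg
  have hg0 : g ≠ 0 := fun h0 ↦ hn2 (by rw [← hφg, h0, map_zero])
  have hdK : (d : K) ≠ 0 := by exact_mod_cast (by omega : d ≠ 0)
  have hlow := liouville φ hgI (mul_ne_zero (pow_ne_zero _ hdK) hg0)
  rw [← Nat.cast_pow, house_nat_mul, map_mul, map_natCast, norm_mul, Complex.norm_natCast,
    Nat.cast_pow, hφg, hh] at hlow
  have hup := hupper (2 * m * t) n (fun i j ↦ φ (ξ i j)) X hX0
    (fun i j ↦ (norm_embedding_le_house _ φ).trans (hξX i j)) R (hC2.trans hCR)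
    (fun k i hi ↦ hF ▸ hn1 k i hi) k
  rw [← hF] at hup
  have hup' : ‖iteratedDeriv n F (u k)‖ * R ^ (m * n) ≤
      C ^ (3 * (2 * m * t)) * n.factorial * C ^ (m * n) *
        ((2 * m * t : ℕ) ^ 2 * (X * Real.exp (C * (1 + R) ^ 3) ^ (3 * (2 * m * t)))) := by
    refine hup.trans ?_
    have hC20 : 0 ≤ C₂ := zero_le_one.trans hC₂
    clear hup hlow hgH hξX hξH hR6 htB
    gcongr
  rw [hX] at hgH hup'
  have hfinal := order_bound hh1 hm hC1 ht1 hnS (hdC₀.trans hC0) (hC1.trans hCR) hR6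
    (norm_nonneg _) (house_nonneg g) hgH hup' hlow
  have hn1' : (1 : ℝ) ≤ n := by exact_mod_cast ht1.trans htn
  exact absurd (((le_self_pow₀ hn1' two_ne_zero).trans hfinal).trans_lt htB) (not_lt.2 htn')

end Schneider

namespace Schneider

open Filter Topology PeriodPair
open NumberField

variable {K : Type*} [Field K] [NumberField K]

/-! ### Infinitely many points with values in a number field -/

/-- The transcendence criterion: `℘`, `℘'` and `f` do not all take values in a number field
(containing `g₂`, `α`, `β`) at infinitely many points. -/
lemma not_infinitely_many (L : PeriodPair) {α β : ℂ} (hαβ : ¬(α = 0 ∧ β = 0)) (φ : K →+* ℂ)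
    (hg : L.g₂ ∈ φ.fieldRange) (ha : α ∈ φ.fieldRange) (hb : β ∈ φ.fieldRange)
    {u : ℕ → ℂ} (hinj : Function.Injective u) (hu : ∀ k, u k ∉ L.lattice)
    (hP : ∀ k, ℘[L] (u k) ∈ φ.fieldRange) (hP' : ∀ k, ℘'[L] (u k) ∈ φ.fieldRange)
    (hf : ∀ k, ff L α β (u k) ∈ φ.fieldRange) : False := by
  obtain ⟨g, hg⟩ := hg
  obtain ⟨a, ha⟩ := ha
  obtain ⟨b, hb⟩ := hb
  have key : ∀ k, ∃ (d : ℕ) (r M : ℝ), 1 ≤ d ∧ 0 < r ∧ 1 ≤ M ∧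
      Good φ d r M 1 ℘[L] (u k) ∧ Good φ d r M 1 (ff L α β) (u k) := fun k ↦ by
    obtain ⟨x₀, h₀⟩ := hP k
    obtain ⟨x₁, h₁⟩ := hP' k
    obtain ⟨y₀, hy⟩ := hf k
    exact exists_good L φ (hu k) h₀ h₁ hy hg ha hb
  choose d r M hd hr hM hGP hGf using key
  obtain ⟨m, hm⟩ : ∃ m, m = 12 * Module.finrank ℚ K + 12 := ⟨_, rfl⟩
  -- common constants for the first `m` points
  obtain ⟨D, hD1, hD⟩ : ∃ D : ℕ, 1 ≤ D ∧ ∀ k : Fin m, d k ∣ D :=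
    ⟨∏ k : Fin m, d k, Finset.one_le_prod' fun k _ ↦ hd k,
      fun k ↦ Finset.dvd_prod_of_mem (fun k : Fin m ↦ d k) (Finset.mem_univ k)⟩
  obtain ⟨B, hB1, hB⟩ : ∃ B : ℝ, 1 ≤ B ∧ ∀ k : Fin m, M k ≤ B := by
    refine ⟨1 + ∑ k : Fin m, M k, ?_, fun k ↦ ?_⟩
    · have := Finset.sum_nonneg (s := Finset.univ) fun (k : Fin m) _ ↦ zero_le_one.trans (hM k)
      linarith
    · have := Finset.single_le_sum (f := fun k : Fin m ↦ M k)
        (fun k _ ↦ zero_le_one.trans (hM k)) (Finset.mem_univ k)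
      linarith
  obtain ⟨ρ, hρ0, hρ⟩ : ∃ ρ : ℝ, 0 < ρ ∧ ∀ k : Fin m, ρ ≤ r k := by
    have hne : (Finset.univ : Finset (Fin m)).Nonempty := ⟨⟨0, by omega⟩, Finset.mem_univ _⟩
    refine ⟨Finset.univ.inf' hne fun k : Fin m ↦ r k, ?_, fun k ↦
      Finset.inf'_le _ (Finset.mem_univ k)⟩
    exact (Finset.lt_inf'_iff _).2 fun k _ ↦ hr k
  refine criterion L hαβ φ rfl hm (u := fun k : Fin m ↦ u k)
    (fun i j h ↦ Fin.ext (hinj h)) (fun k ↦ hu k) hD1 hρ0 hB1 (fun k ↦ ?_) fun k ↦ ?_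
  · exact (hGP k).mono (hD k) hρ0.le (hρ k) (zero_le_one.trans (hM k)) (hB k)
  · exact (hGf k).mono (hD k) hρ0.le (hρ k) (zero_le_one.trans (hM k)) (hB k)

section

variable (L : PeriodPair) {α β : ℂ}

/-- A field containing `g₂`, `β` and the values of `℘`, `℘'`, `f` at `z` contains their values
at `2z`. -/
lemma values_dup (k : Subfield ℂ) (hg : L.g₂ ∈ k) (hb : β ∈ k) {z : ℂ} (hz : z ∉ L.lattice)
    (hz2 : 2 * z ∉ L.lattice) (hP : ℘[L] z ∈ k) (hP' : ℘'[L] z ∈ k) (hf : ff L α β z ∈ k) :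
    ℘[L] (2 * z) ∈ k ∧ ℘'[L] (2 * z) ∈ k ∧ ff L α β (2 * z) ∈ k := by
  have n : ∀ n : ℕ, (n : ℂ) ∈ k := fun n ↦ natCast_mem k n
  have h2 : (2 : ℂ) ∈ k := by exact_mod_cast n 2
  have h3 : (3 : ℂ) ∈ k := by exact_mod_cast n 3
  have h4 : (4 : ℂ) ∈ k := by exact_mod_cast n 4
  have h6 : (6 : ℂ) ∈ k := by exact_mod_cast n 6
  have hQ : 6 * ℘[L] z ^ 2 - L.g₂ / 2 ∈ k :=
    k.sub_mem (k.mul_mem h6 (k.pow_mem hP 2)) (k.div_mem hg h2)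
  refine ⟨?_, ?_, ?_⟩
  · rw [P_dup L hz hz2]
    exact k.add_mem (k.mul_mem (k.neg_mem h2) hP)
      (k.div_mem (k.pow_mem hQ 2) (k.mul_mem h4 (k.pow_mem hP' 2)))
  · rw [P'_dup L hz hz2]
    exact k.sub_mem (k.add_mem (k.neg_mem hP') (k.div_mem (k.mul_mem (k.mul_mem h3 hP) hQ) hP'))
      (k.div_mem (k.pow_mem hQ 3) (k.mul_mem h4 (k.pow_mem hP' 3)))
  · have e : ff L α β (2 * z) =
        2 * ff L α β z + β * ((6 * ℘[L] z ^ 2 - L.g₂ / 2) / (2 * ℘'[L] z)) := by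
      rw [ff, ff, zt_dup L hz hz2]; ring
    rw [e]
    exact k.add_mem (k.mul_mem h2 hf) (k.mul_mem hb (k.div_mem hQ (k.mul_mem h2 hP')))

/-- At the odd multiples of a half-period `h`, the functions `℘`, `℘'` take the same values as at
`h`, and `f` is multiplied by the odd integer. -/
lemma values_odd {h : ℂ} (hh : h ∉ L.lattice) (hh2 : 2 * h ∈ L.lattice) (n : ℕ) :
    (2 * n + 1) * h ∉ L.lattice ∧ ℘[L] ((2 * n + 1) * h) = ℘[L] h ∧
      ℘'[L] ((2 * n + 1) * h) = ℘'[L] h ∧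
      ff L α β ((2 * n + 1) * h) = (2 * n + 1) * ff L α β h := by
  induction n with
  | zero => simpa using hh
  | succ n ih =>
    obtain ⟨h1, h2, h3, h4⟩ := ih
    set ω : L.lattice := ⟨2 * h, hh2⟩ with hω
    have e : (2 * (n + 1 : ℕ) + 1) * h = (2 * n + 1) * h + (ω : ℂ) := by
      rw [hω]; push_cast; ring
    rw [e]
    refine ⟨add_notMem L h1 ω, ?_, ?_, ?_⟩
    · rw [L.weierstrassP_add_coe, h2]
    · rw [L.derivWeierstrassP_add_coe, h3]
    · rw [ff_add L h1, h4, periods_half L h hh ω rfl, ff]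
      simp only [hω]
      push_cast
      ring

end

/-- A point of `ℂ ∖ Ω` at which `℘`, `℘'` and `f` take values in a number field gives rise to
infinitely many: its multiples by powers of two, or, when one of these lies in `Ω`, the odd multiples
of the last one outside `Ω`. -/
lemma not_in_number_field (L : PeriodPair) {α β : ℂ} (hαβ : ¬(α = 0 ∧ β = 0)) (φ : K →+* ℂ)
    (hg : L.g₂ ∈ φ.fieldRange) (ha : α ∈ φ.fieldRange) (hb : β ∈ φ.fieldRange)
    {p : ℂ} (hp : p ∉ L.lattice) (hP : ℘[L] p ∈ φ.fieldRange) (hP' : ℘'[L] p ∈ φ.fieldRange)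
    (hf : ff L α β p ∈ φ.fieldRange) : False := by
  have hp0 : p ≠ 0 := by rintro rfl; exact hp (zero_mem _)
  have hval : ∀ k : ℕ, (∀ i ≤ k, 2 ^ i * p ∉ L.lattice) → ℘[L] (2 ^ k * p) ∈ φ.fieldRange ∧
      ℘'[L] (2 ^ k * p) ∈ φ.fieldRange ∧ ff L α β (2 ^ k * p) ∈ φ.fieldRange := by
    intro k
    induction k with
    | zero => intro _; simpa using ⟨hP, hP', hf⟩
    | succ k ih =>
      intro hk
      obtain ⟨h1, h2, h3⟩ := ih fun i hi ↦ hk i (by omega)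
      have e : (2 : ℂ) ^ (k + 1) * p = 2 * (2 ^ k * p) := by ring
      have hk1 := hk (k + 1) le_rfl
      rw [e] at hk1 ⊢
      exact values_dup L _ hg hb (hk k (by omega)) hk1 h1 h2 h3
  by_cases hall : ∀ k : ℕ, 2 ^ k * p ∉ L.lattice
  · refine not_infinitely_many L hαβ φ hg ha hb (u := fun k ↦ 2 ^ k * p) (fun i j hij ↦ ?_) hall
      (fun k ↦ (hval k fun i _ ↦ hall i).1) (fun k ↦ (hval k fun i _ ↦ hall i).2.1)
      fun k ↦ (hval k fun i _ ↦ hall i).2.2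
    have h1 := mul_right_cancel₀ hp0 hij
    exact Nat.pow_right_injective le_rfl (by exact_mod_cast h1)
  · push Not at hall
    classical
    obtain ⟨k, hk, hk2⟩ : ∃ k : ℕ, (∀ i ≤ k, 2 ^ i * p ∉ L.lattice) ∧
        2 * (2 ^ k * p) ∈ L.lattice := by
      have h1 := Nat.find_spec hall
      have h0 : Nat.find hall ≠ 0 := fun h0 ↦ by
        rw [h0, pow_zero, one_mul] at h1
        exact hp h1
      obtain ⟨k, hk⟩ := Nat.exists_eq_succ_of_ne_zero h0
      refine ⟨k, fun i hi ↦ Nat.find_min hall (by omega), ?_⟩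
      rw [hk, Nat.succ_eq_add_one, pow_succ] at h1
      rwa [show (2 : ℂ) * (2 ^ k * p) = 2 ^ k * 2 * p by ring]
    obtain ⟨h1, h2, h3⟩ := hval k hk
    have hh := hk k le_rfl
    have hh0 : (2 : ℂ) ^ k * p ≠ 0 := mul_ne_zero (pow_ne_zero _ two_ne_zero) hp0
    generalize (2 : ℂ) ^ k * p = h at *
    have hv := values_odd L (α := α) (β := β) hh hk2
    refine not_infinitely_many L hαβ φ hg ha hb (u := fun n : ℕ ↦ (2 * n + 1) * h)
      (fun i j hij ↦ ?_) (fun n ↦ (hv n).1) (fun n ↦ ?_) (fun n ↦ ?_) fun n ↦ ?_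
    · have h1 := mul_right_cancel₀ hh0 hij
      have h2 : 2 * i + 1 = 2 * j + 1 := by exact_mod_cast h1
      omega
    · rwa [(hv n).2.1]
    · rwa [(hv n).2.2.1]
    · rw [(hv n).2.2.2]
      refine φ.fieldRange.mul_mem ?_ h3
      exact_mod_cast natCast_mem φ.fieldRange (2 * n + 1)

end Schneider

/-- **Schneider's theorem (first form).** If `Ω` is a lattice in `ℂ`, `(α, β) ≠ (0, 0)` and
`p ∈ ℂ ∖ Ω`, then at least one of the six numbers `α`, `β`, `g₂`, `g₃`, `℘(p)`,
`αp + βζ(p)` is transcendental over `ℚ`. -/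
theorem schneider_one (ω₁ ω₂ : ℂ) (hΩ : IsLatticeBasis ω₁ ω₂)
    (α β : ℂ) (hαβ : (α, β) ≠ (0, 0)) (p : ℂ) (hp : p ∉ LatticePts ω₁ ω₂) :
    Transcendental ℚ α ∨ Transcendental ℚ β ∨ Transcendental ℚ (g2 ω₁ ω₂) ∨
      Transcendental ℚ (g3 ω₁ ω₂) ∨ Transcendental ℚ (wP ω₁ ω₂ p) ∨
      Transcendental ℚ (α * p + β * wZeta ω₁ ω₂ p) := by
  by_contra hcon
  simp only [Transcendental, not_or, not_not] at hcon
  obtain ⟨ha, hb, hg2, hg3, hP, hf⟩ := hcon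
  let L : PeriodPair := ⟨ω₁, ω₂, hΩ⟩
  have hpL : p ∉ L.lattice := fun h ↦ hp ((Schneider.mem_latticePts L).2 h)
  have eP : wP ω₁ ω₂ p = L.weierstrassP p := Schneider.wP_eq L hpL
  have eg2 : g2 ω₁ ω₂ = L.g₂ := Schneider.g2_eq L
  have eg3 : g3 ω₁ ω₂ = L.g₃ := Schneider.g3_eq L
  have ef : α * p + β * wZeta ω₁ ω₂ p = Schneider.ff L α β p := rfl
  rw [eP] at hP
  rw [eg2] at hg2
  rw [eg3] at hg3
  rw [ef] at hf
  -- `℘'(p)` is algebraic because its square is `4℘(p)³ - g₂℘(p) - g₃`.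
  have hP' : IsAlgebraic ℚ (L.derivWeierstrassP p) := by
    have h4 : IsAlgebraic ℚ (4 : ℂ) := by exact_mod_cast isAlgebraic_natCast (R := ℚ) (A := ℂ) 4
    have := ((h4.mul (hP.pow 3)).sub (hg2.mul hP)).sub hg3
    rw [← L.derivWeierstrassP_sq p hpL] at this
    exact this.of_pow two_pos
  let S : Set ℂ := {α, β, L.g₂, L.weierstrassP p, L.derivWeierstrassP p, Schneider.ff L α β p}
  have hfin : FiniteDimensional ℚ (IntermediateField.adjoin ℚ S) := by
    refine IntermediateField.finiteDimensional_adjoin (S := S) ?_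
    rintro x (rfl | rfl | rfl | rfl | rfl | rfl)
    exacts [ha.isIntegral, hb.isIntegral, hg2.isIntegral, hP.isIntegral, hP'.isIntegral,
      hf.isIntegral]
  have hK : NumberField (IntermediateField.adjoin ℚ S) := ⟨⟩
  have hmem : ∀ x ∈ S, x ∈ (algebraMap (IntermediateField.adjoin ℚ S) ℂ).fieldRange :=
    fun x hx ↦ ⟨⟨x, IntermediateField.subset_adjoin ℚ S hx⟩, rfl⟩
  exact Schneider.not_in_number_field L (α := α) (β := β) (fun h ↦ hαβ (by rw [h.1, h.2]))
    (algebraMap (IntermediateField.adjoin ℚ S) ℂ) (hmem _ (by simp [S])) (hmem _ (by simp [S]))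
    (hmem _ (by simp [S])) hpL (hmem _ (by simp [S])) (hmem _ (by simp [S]))
    (hmem _ (by simp [S]))
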